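/- For every integer n ≥ 5 and every ε > 0 there exists a constant C such that for every integer m ≥ 1, W₂²(ρ_m, σ) ≤ C m^{−(n−3)/(2(3n−2)(n+1)) + ε}, where ρ_m is the normalized counting measure on the rescaled integer points Λ_m on the sphere S^{n−1} and σ is the uniform probability measure on S^{n−1}. -/

import Mathlib

/-!
The points of `Λ_m` are compared with `σ` through the exponential kernel `exp (t⟪x, y⟫)`, which has
constant mass `I` against `σ` and, for large `t`, is concentrated near `x = y`.

*From kernel bounds to transport* (`coupling_bound`). If the kernel has mass at most `I (1 + η)`
against `ρ_m` at every point of the sphere, then the density `exp (t⟪x, y⟫) / (I (1 + η))` with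
respect to `ρ_m ⊗ σ`, corrected by a product part of total mass at most `η`, is a coupling. Its
cost is at most `D + 4η`, where `D` is the mean squared distance `|x - y|²` under the kernel.
Rotation invariance of `σ` and a pigeonhole bound on caps (`IsUnif.exp_lower`) give `D ≪ t^(-1/2)`
(`IsUnif.spread_le`) and `I ≫ t^(-n) e^t`.

*The kernel against `ρ_m`* (`weyl_bound`). Up to an elementary factor,
`Σ_{|x|² = m} exp (t⟪x, y⟫ / √m)` is the `m`-th Fourier coefficient of the theta function
`Σ_x exp (2πi s⟪x, y⟫ + πi|x|²τ) = ∏ⱼ θ(s yⱼ, τ)` with `s` purely imaginary. For unit vectors `y`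
and `w` the sum, over the three theta characteristics, of the absolute differences between the
products for `y` and for `w`, multiplied by `(Im τ)^(n/4) exp (-π (Im s)² / Im τ)`, is invariant
under `(s, τ) ↦ (s, τ + 1)` and `(s, τ) ↦ (s/τ, -1/τ)`, because the
automorphy factor depends on `y` only through `|y| = 1`. On the region `Im τ ≥ √3/2`, which contains
the fundamental domain, it is bounded: the constant terms of the two products cancel near the
cusp. The `SL₂(ℤ)`-action spreads this bound over the whole upper half plane. Taking
`Im τ ≍ t / m` shows that the sums for `y` and `w` differ by at most `O(m^(n/4) e^t)`; averaging over
`w` with respect to `σ` compares the sum for `y` with `r_n(m) I`.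

*The number of points* (`card_pts_lower`). It remains to know that `r_n(m) ≫ m^(n/2 - 1)`. Fixing
coordinates reduces this to `r_4(u) ≥ u` for odd `u` (`le_card_pts_four`), proved by attaching to
each `t` modulo `u` a Lipschitz quaternion of norm `u` in the left ideal annihilating the column
`(1, t)` of a splitting of the quaternions modulo `u`. Such a quaternion exists by Minkowski's
theorem (`exists_short_mem_ker`) and determines `t` (`quat_line_unique`).

Altogether `W₂² ≪ t^(-1/2) + m^(1 - n/4) t^n`, and the choice `t = m^(2 * e)`, where `-e` is the
exponent of the theorem without `ε`, gives the result.

With the Hausdorff-measure definition of `σ`, it is not needed that the sphere has positive finite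
measure: otherwise `unifSphere n = 0`, there is no coupling, and the infimum is the junk value `0`.
-/

open MeasureTheory ProbabilityTheory Real Filter

noncomputable section

abbrev En (n : ℕ) := EuclideanSpace ℝ (Fin n)

/-- The rescaled lattice points `Λ_m = {λ ∈ (1/√m)ℤⁿ : |λ| = 1}` on the unit sphere. -/
def Lam (n m : ℕ) : Set (En n) :=
  {x | ‖x‖ = 1 ∧ ∀ i, ∃ z : ℤ, x i = z / Real.sqrt m}

/-- `r_n(m)`, the number of points of `Λ_m`. -/
def rcnt (n m : ℕ) : ℕ := Nat.card (Lam n m)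

/-- The normalized counting (probability) measure `ρ_m` on `Λ_m`. -/
def rhoM (n m : ℕ) : Measure (En n) :=
  ((rcnt n m : ENNReal))⁻¹ • Measure.count.restrict (Lam n m)

/-- The uniform probability measure on the unit sphere `S^{n-1}`,
defined via the `(n-1)`-dimensional Hausdorff measure. -/
def unifSphere (n : ℕ) : Measure (En n) :=
  (μH[(n : ℝ) - 1] (Metric.sphere (0 : En n) 1))⁻¹ •
    (μH[(n : ℝ) - 1]).restrict (Metric.sphere (0 : En n) 1)

/-- Squared Wasserstein-2 distance: infimum of the quadratic transport cost over
all couplings. -/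
def W2sq {n : ℕ} (μ ν : Measure (En n)) : ℝ :=
  sInf {c : ℝ | ∃ ρ : Measure (En n × En n),
    ρ.map Prod.fst = μ ∧ ρ.map Prod.snd = ν ∧
    c = ∫ p : En n × En n, dist p.1 p.2 ^ 2 ∂ρ}

/-! ### Theta functions and modular invariance -/

section

/-- The three even Jacobi theta functions `θ₃`, `θ₄`, `θ₂`, which the modular group permutes up to
automorphy factors. -/
def th (i : Fin 3) (z τ : ℂ) : ℂ :=
  match i with
  | 0 => jacobiTheta₂ z τ
  | 1 => jacobiTheta₂ (z + 1 / 2) τ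
  | 2 => Complex.exp (π * Complex.I * (τ / 4 + z)) * jacobiTheta₂ (z + τ / 2) τ

lemma jacobiTheta₂_add_one (z τ : ℂ) :
    jacobiTheta₂ z (τ + 1) = jacobiTheta₂ (z + 1 / 2) τ := by
  unfold jacobiTheta₂
  refine tsum_congr fun k => ?_
  unfold jacobiTheta₂_term
  obtain ⟨l, hl⟩ := Int.even_mul_succ_self (k - 1)
  have hl' : (k : ℂ) ^ 2 = 2 * l + k := by
    have : k ^ 2 = 2 * l + k := by linarith [hl]
    exact_mod_cast this
  have : 2 * (π : ℂ) * Complex.I * k * z + π * Complex.I * k ^ 2 * (τ + 1)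
      = (2 * (π : ℂ) * Complex.I * k * (z + 1 / 2) + π * Complex.I * k ^ 2 * τ)
        + l * (2 * π * Complex.I) := by
    linear_combination (π * Complex.I : ℂ) * hl'
  rw [this, Complex.exp_add, Complex.exp_int_mul_two_pi_mul_I, mul_one]

/-- Under `τ ↦ τ + 1` the first two theta functions are exchanged and the third is multiplied by
an eighth root of unity. -/
lemma th_T (z τ : ℂ) : th 0 z (τ + 1) = th 1 z τ ∧ th 1 z (τ + 1) = th 0 z τ ∧
    th 2 z (τ + 1) = Complex.exp (π * Complex.I / 4) * th 2 z τ := by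
  refine ⟨jacobiTheta₂_add_one z τ, ?_, ?_⟩
  · simp only [th]
    rw [jacobiTheta₂_add_one, add_assoc, add_halves, jacobiTheta₂_add_left]
  · simp only [th]
    rw [jacobiTheta₂_add_one,
      show z + (τ + 1) / 2 + 1 / 2 = z + τ / 2 + 1 by ring, jacobiTheta₂_add_left,
      ← mul_assoc, ← Complex.exp_add]
    congr 2; ring

/-- The automorphy factor of the theta functions for `(z, τ) ↦ (z/τ, -1/τ)`. -/
def thFac (z τ : ℂ) : ℂ :=
  1 / (-Complex.I * τ) ^ (1 / 2 : ℂ) * Complex.exp (-π * Complex.I * z ^ 2 / τ)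

lemma th_S (z τ : ℂ) (hτ : τ ≠ 0) :
    th 0 z τ = thFac z τ * th 0 (z / τ) (-1 / τ) ∧
    th 1 z τ = thFac z τ * th 2 (z / τ) (-1 / τ) ∧
    th 2 z τ = thFac z τ * th 1 (z / τ) (-1 / τ) := by
  refine ⟨jacobiTheta₂_functional_equation z τ, ?_, ?_⟩
  · simp only [th, thFac]
    rw [jacobiTheta₂_functional_equation]
    have h := jacobiTheta₂_add_left' (z / τ - (-1 / τ) / 2) (-1 / τ)
    have h1 : (z + 1 / 2) / τ = z / τ - (-1 / τ) / 2 := by field_simp; ring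
    have h2 : z / τ - (-1 / τ) / 2 + (-1 / τ) = z / τ + (-1 / τ) / 2 := by ring
    rw [h2] at h
    rw [h1, h]
    simp only [mul_assoc]
    congr 1
    simp only [← mul_assoc, ← Complex.exp_add]
    congr 2
    field_simp
    ring
  · simp only [th, thFac]
    rw [jacobiTheta₂_functional_equation]
    have h1 : (z + τ / 2) / τ = z / τ + 1 / 2 := by field_simp
    rw [h1]
    rw [mul_left_comm, ← mul_assoc]
    congr 1
    rw [mul_assoc, ← Complex.exp_add]
    congr 2
    field_simp
    ring

variable {n : ℕ}

/-- The product `∏ⱼ θ(s yⱼ, τ)` for the `i`-th theta function; for `i = 0` it is the theta series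
`Σ_{x ∈ ℤⁿ} exp (2πi s⟪x, y⟫ + πi|x|²τ)`. -/
def thProd (i : Fin 3) (s : ℂ) (y : EuclideanSpace ℝ (Fin n)) (τ : ℂ) : ℂ :=
  ∏ j, th i (s * y j) τ

lemma thProd_T (s : ℂ) (y : EuclideanSpace ℝ (Fin n)) (τ : ℂ) :
    thProd 0 s y (τ + 1) = thProd 1 s y τ ∧ thProd 1 s y (τ + 1) = thProd 0 s y τ ∧
    thProd 2 s y (τ + 1) = Complex.exp (π * Complex.I / 4) ^ n * thProd 2 s y τ := by
  unfold thProd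
  refine ⟨Finset.prod_congr rfl fun j _ => (th_T _ _).1,
    Finset.prod_congr rfl fun j _ => (th_T _ _).2.1, ?_⟩
  simp only [(th_T _ _).2.2, Finset.prod_mul_distrib, Finset.prod_const, Finset.card_univ,
    Fintype.card_fin]

/-- For a unit vector `y` the product of the automorphy factors does not depend on `y`. -/
lemma prod_thFac (s : ℂ) {y : EuclideanSpace ℝ (Fin n)} (hy : ‖y‖ = 1) (τ : ℂ) :
    ∏ j, thFac (s * y j) τ = (1 / (-Complex.I * τ) ^ (1 / 2 : ℂ)) ^ n *
      Complex.exp (-π * Complex.I * s ^ 2 / τ) := by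
  unfold thFac
  rw [Finset.prod_mul_distrib, Finset.prod_const, Finset.card_univ, Fintype.card_fin,
    ← Complex.exp_sum]
  congr 2
  have h : ∑ j, (y j) ^ 2 = 1 := by
    have := EuclideanSpace.real_norm_sq_eq y
    rw [hy] at this; linarith
  have h' : ∑ j, ((y j : ℂ)) ^ 2 = 1 := by exact_mod_cast congrArg (Complex.ofReal) h
  calc _ = ∑ j, (-π * Complex.I * s ^ 2 / τ) * (y j : ℂ) ^ 2 :=
        Finset.sum_congr rfl fun j _ => by ring
    _ = _ := by rw [← Finset.mul_sum, h', mul_one]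

lemma thProd_S (s : ℂ) {y : EuclideanSpace ℝ (Fin n)} (hy : ‖y‖ = 1) (τ : ℂ) (hτ : τ ≠ 0) :
    let F := (1 / (-Complex.I * τ) ^ (1 / 2 : ℂ)) ^ n * Complex.exp (-π * Complex.I * s ^ 2 / τ)
    thProd 0 s y τ = F * thProd 0 (s / τ) y (-1 / τ) ∧
    thProd 1 s y τ = F * thProd 2 (s / τ) y (-1 / τ) ∧
    thProd 2 s y τ = F * thProd 1 (s / τ) y (-1 / τ) := by
  intro F
  have hF : F = ∏ j, thFac (s * y j) τ := (prod_thFac s hy τ).symm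
  have hj : ∀ j, s / τ * (y j : ℂ) = s * y j / τ := fun j => by ring
  rw [hF]
  unfold thProd
  simp only [← Finset.prod_mul_distrib, hj]
  exact ⟨Finset.prod_congr rfl fun j _ => (th_S _ _ hτ).1,
    Finset.prod_congr rfl fun j _ => (th_S _ _ hτ).2.1,
    Finset.prod_congr rfl fun j _ => (th_S _ _ hτ).2.2⟩

/-- The total difference of the theta products attached to `y` and `w`, normalised so as to be
invariant under the modular group (`thDiff_T`, `thDiff_S`) when `y` and `w` are unit vectors. -/
def thDiff (y w : EuclideanSpace ℝ (Fin n)) (s τ : ℂ) : ℝ :=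
  τ.im ^ ((n : ℝ) / 4) * Real.exp (-π * s.im ^ 2 / τ.im) *
    ∑ i, ‖thProd i s y τ - thProd i s w τ‖

lemma thDiff_T (y w : EuclideanSpace ℝ (Fin n)) (s τ : ℂ) :
    thDiff y w s (τ + 1) = thDiff y w s τ := by
  unfold thDiff
  have h1 : ‖Complex.exp (π * Complex.I / 4)‖ = 1 := by
    rw [show (π : ℂ) * Complex.I / 4 = ((π / 4 : ℝ) : ℂ) * Complex.I by push_cast; ring]
    exact Complex.norm_exp_ofReal_mul_I _
  simp only [Fin.sum_univ_three, (thProd_T s _ τ).1, (thProd_T s _ τ).2.1, (thProd_T s _ τ).2.2,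
    ← mul_sub, norm_mul, norm_pow, h1, Complex.add_im, Complex.one_im, add_zero, one_pow, one_mul]
  ring

lemma thDiff_S {y w : EuclideanSpace ℝ (Fin n)} (hy : ‖y‖ = 1) (hw : ‖w‖ = 1) (s τ : ℂ)
    (hτ : 0 < τ.im) : thDiff y w s τ = thDiff y w (s / τ) (-1 / τ) := by
  have hτ0 : τ ≠ 0 := by rintro rfl; simp at hτ
  obtain ⟨a1, a2, a3⟩ := thProd_S s hy τ hτ0
  obtain ⟨b1, b2, b3⟩ := thProd_S s hw τ hτ0
  unfold thDiff
  have hN : 0 < Complex.normSq τ := Complex.normSq_pos.2 hτ0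
  have him : (-1 / τ).im = τ.im / Complex.normSq τ := by
    rw [Complex.div_im]; simp [neg_div]
  have hsq : ‖τ‖ ^ 2 = Complex.normSq τ := Complex.sq_norm τ
  have hnτ : 0 < ‖τ‖ := norm_pos_iff.2 hτ0
  simp only [Fin.sum_univ_three, a1, a2, a3, b1, b2, b3, ← mul_sub, norm_mul, norm_pow, him]
  have e1 : ‖1 / (-Complex.I * τ) ^ (1 / 2 : ℂ)‖ = ‖τ‖ ^ (-(1 / 2) : ℝ) := by
    rw [norm_div, norm_one, show (1 / 2 : ℂ) = ((1 / 2 : ℝ) : ℂ) by push_cast; ring,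
      Complex.norm_cpow_real, norm_mul, norm_neg, Complex.norm_I, one_mul,
      Real.rpow_neg hnτ.le, one_div]
  have e2 : (τ.im / Complex.normSq τ) ^ ((n : ℝ) / 4)
      = τ.im ^ ((n : ℝ) / 4) * (‖τ‖ ^ (-(1 / 2) : ℝ)) ^ n := by
    rw [Real.div_rpow hτ.le hN.le, ← hsq, ← Real.rpow_natCast, ← Real.rpow_natCast,
      ← Real.rpow_mul hnτ.le, ← Real.rpow_mul hnτ.le, div_eq_mul_inv, ← Real.rpow_neg hnτ.le]
    congr 2; push_cast; ring
  have e3 : Real.exp (-π * (s / τ).im ^ 2 / (τ.im / Complex.normSq τ))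
      = Real.exp (-π * s.im ^ 2 / τ.im) * ‖Complex.exp (-π * Complex.I * s ^ 2 / τ)‖ := by
    rw [Complex.norm_exp, ← Real.exp_add]
    congr 1
    have hre : (-π * Complex.I * s ^ 2 / τ).re = π * (s ^ 2 / τ).im := by
      rw [show -(π : ℂ) * Complex.I * s ^ 2 / τ = ((-π : ℝ) : ℂ) * (Complex.I * (s ^ 2 / τ)) by
        push_cast; ring, Complex.re_ofReal_mul, Complex.I_mul_re]
      ring
    rw [hre, Complex.div_im, Complex.div_im]
    have hNd : Complex.normSq τ = τ.re * τ.re + τ.im * τ.im := Complex.normSq_apply τ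
    have hs1 : (s ^ 2).im = 2 * s.re * s.im := by simp [pow_two]; ring
    have hs2 : (s ^ 2).re = s.re ^ 2 - s.im ^ 2 := by simp [pow_two]
    rw [hs1, hs2]
    field_simp
    rw [hNd]
    ring
  rw [e1, e2, e3]
  ring

/-- The region `|s|² ≤ κ Im τ` is invariant under `(s, τ) ↦ (s/τ, -1/τ)`. -/
lemma div_norm_S (s τ : ℂ) (κ : ℝ) (hτ : 0 < τ.im) :
    ‖s / τ‖ ^ 2 ≤ κ * (-1 / τ).im ↔ ‖s‖ ^ 2 ≤ κ * τ.im := by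
  have hτ0 : τ ≠ 0 := by rintro rfl; simp at hτ
  have hN : 0 < Complex.normSq τ := Complex.normSq_pos.2 hτ0
  have him : (-1 / τ).im = τ.im / Complex.normSq τ := by
    rw [Complex.div_im]; simp [neg_div]
  rw [him, norm_div, div_pow, Complex.sq_norm τ, ← mul_div_assoc, div_le_div_iff_of_pos_right hN]

open UpperHalfPlane in
/-- A bound for `thDiff` on `Im τ ≥ √3/2`, which contains the fundamental domain of the modular
group, holds on the whole upper half plane. -/
lemma thDiff_le_of_fd {y w : EuclideanSpace ℝ (Fin n)} (hy : ‖y‖ = 1) (hw : ‖w‖ = 1) (κ B : ℝ)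
    (h : ∀ τ : ℂ, √3 / 2 ≤ τ.im → ∀ s : ℂ, ‖s‖ ^ 2 ≤ κ * τ.im → thDiff y w s τ ≤ B)
    (τ : ℂ) (hτ : 0 < τ.im) (s : ℂ) (hs : ‖s‖ ^ 2 ≤ κ * τ.im) : thDiff y w s τ ≤ B := by
  set P : ℍ → Prop := fun z => ∀ s : ℂ, ‖s‖ ^ 2 ≤ κ * (z : ℂ).im → thDiff y w s z ≤ B with hP
  have hT : ∀ z : ℍ, P (ModularGroup.T • z) ↔ P z := by
    intro z
    have hz : ((ModularGroup.T • z : ℍ) : ℂ) = (z : ℂ) + 1 := by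
      rw [UpperHalfPlane.modular_T_smul]
      rw [UpperHalfPlane.coe_vadd]; push_cast; ring
    simp only [hP, hz, thDiff_T, Complex.add_im, Complex.one_im, add_zero]
  have hS : ∀ z : ℍ, P (ModularGroup.S • z) ↔ P z := by
    intro z
    have hz : ((ModularGroup.S • z : ℍ) : ℂ) = -1 / (z : ℂ) := by
      rw [UpperHalfPlane.modular_S_smul]
      simp [neg_div, inv_neg]
    have hz0 : (z : ℂ) ≠ 0 := z.ne_zero
    have him : 0 < (z : ℂ).im := z.im_pos
    simp only [hP, hz]
    constructor
    · intro H s hs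
      rw [thDiff_S hy hw s z him]
      exact H _ ((div_norm_S s z κ him).2 hs)
    · intro H s hs
      have h1 : s = (s * z) / z := by field_simp
      rw [h1, ← thDiff_S hy hw (s * z) z him]
      rw [h1] at hs
      exact H _ ((div_norm_S _ z κ him).1 hs)
  have hall : ∀ g : Matrix.SpecialLinearGroup (Fin 2) ℤ, ∀ z : ℍ, P (g • z) ↔ P z := by
    intro g
    have hg : g ∈ Subgroup.closure {ModularGroup.S, ModularGroup.T} := by
      rw [SpecialLinearGroup.SL2Z_generators]; trivial
    induction hg using Subgroup.closure_induction with
    | mem x hx =>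
      rcases hx with rfl | rfl
      · exact hS
      · exact hT
    | one => intro z; rw [one_smul]
    | mul a b _ _ iha ihb => intro z; rw [mul_smul, iha, ihb]
    | inv a _ iha => intro z; rw [← iha, smul_inv_smul]
  let z : ℍ := ⟨τ, hτ⟩
  obtain ⟨g, hg⟩ := ModularGroup.exists_smul_mem_fd z
  have h3 := ModularGroup.three_le_four_mul_im_sq_of_mem_fd hg
  have h4 : √3 / 2 ≤ (g • z).im := by
    have h0 := (g • z).im_pos
    have := Real.sqrt_le_sqrt h3
    rw [show 4 * (g • z).im ^ 2 = (2 * (g • z).im) ^ 2 by ring, Real.sqrt_sq (by positivity)] at this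
    linarith
  have : P z := (hall g z).1 (fun s hs => h _ h4 s hs)
  exact this s hs

end

/-! ### Bounds for theta functions high in the upper half plane -/

section

variable {n : ℕ}

lemma summable_gauss : Summable fun k : ℤ => Real.exp (-π * k ^ 2 / 8) := by
  have h := ((summable_jacobiTheta₂_term_iff 0 (Complex.I / 8)).2 (by simp)).norm
  refine h.congr fun k => ?_
  rw [norm_jacobiTheta₂_term]
  congr 1
  simp
  ring

/-- A constant, at least `1`, dominating all Gaussian sums that occur on `Im τ ≥ 1/2`. -/
def gaussC : ℝ := ∑' k : ℤ, Real.exp (-π * k ^ 2 / 8)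

lemma one_le_gaussC : 1 ≤ gaussC := by
  have := summable_gauss.le_tsum (0 : ℤ) (fun _ _ => (Real.exp_pos _).le)
  simpa [gaussC] using this

/-- Gaussian sums over shifted integers are bounded uniformly in the shift. -/
lemma gauss_shift (v : ℝ) (hv : 1 / 2 ≤ v) (w : ℝ) :
    Summable (fun k : ℤ => Real.exp (-π * v * (k + w) ^ 2)) ∧
    ∑' k : ℤ, Real.exp (-π * v * (k + w) ^ 2) ≤ gaussC := by
  set f := w - round w with hf
  have hf1 : |f| ≤ 1 / 2 := abs_sub_round w
  have key : ∀ k : ℤ, Real.exp (-π * v * (k + f) ^ 2) ≤ Real.exp (-π * k ^ 2 / 8) := by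
    intro k
    apply Real.exp_le_exp.2
    have h1 : (k : ℝ) ^ 2 / 4 ≤ (k + f) ^ 2 := by
      rw [abs_le] at hf1
      rcases lt_trichotomy k 0 with h | h | h
      · have : (k : ℝ) ≤ -1 := by exact_mod_cast Int.le_sub_one_of_lt h
        nlinarith
      · subst h; simp; positivity
      · have : (1 : ℝ) ≤ k := by exact_mod_cast h
        nlinarith
    have h2 : (k : ℝ) ^ 2 / 8 ≤ v * (k + f) ^ 2 := by nlinarith [sq_nonneg ((k : ℝ) + f)]
    nlinarith [Real.pi_pos]
  have hs : Summable (fun k : ℤ => Real.exp (-π * v * (k + f) ^ 2)) :=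
    Summable.of_nonneg_of_le (fun _ => (Real.exp_pos _).le) key summable_gauss
  have hshift : ∀ k : ℤ, Real.exp (-π * v * (k + w) ^ 2)
      = (fun k : ℤ => Real.exp (-π * v * (k + f) ^ 2)) ((Equiv.addRight (round w)) k) := by
    intro k
    simp only [Equiv.coe_addRight, hf]
    push_cast
    congr 2
    ring
  refine ⟨?_, ?_⟩
  · simp only [hshift]
    exact (Equiv.summable_iff (Equiv.addRight (round w))
      (f := fun k : ℤ => Real.exp (-π * v * (k + f) ^ 2))).2 hs
  · simp only [hshift]
    rw [Equiv.tsum_eq (Equiv.addRight (round w)) (fun k : ℤ => Real.exp (-π * v * (k + f) ^ 2))]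
    exact hs.tsum_le_tsum key summable_gauss

/-- Completing the square: the factor `exp (-π (Im z)² / Im τ)` turns the theta series into a shifted
Gaussian sum. -/
lemma norm_theta_gauss (z τ : ℂ) (hv : 1 / 2 ≤ τ.im) :
    ‖jacobiTheta₂ z τ‖ * Real.exp (-π * z.im ^ 2 / τ.im) ≤ gaussC := by
  have hv0 : 0 < τ.im := by linarith
  obtain ⟨h1, h2⟩ := gauss_shift τ.im hv (z.im / τ.im)
  refine le_trans ?_ h2
  have hk : ∀ k : ℤ, ‖jacobiTheta₂_term k z τ‖ * Real.exp (-π * z.im ^ 2 / τ.im)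
      = Real.exp (-π * τ.im * (k + z.im / τ.im) ^ 2) := by
    intro k
    rw [norm_jacobiTheta₂_term, ← Real.exp_add]
    congr 1
    field_simp
    ring
  simp only [← hk]
  rw [tsum_mul_right]
  gcongr
  exact norm_tsum_le_tsum_norm ((summable_jacobiTheta₂_term_iff z τ).2 hv0).norm

lemma norm_th_gauss (i : Fin 3) (z τ : ℂ) (hv : 1 / 2 ≤ τ.im) :
    ‖th i z τ‖ * Real.exp (-π * z.im ^ 2 / τ.im) ≤ gaussC := by
  have hv0 : 0 < τ.im := by linarith
  match i with
  | 0 => exact norm_theta_gauss z τ hv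
  | 1 =>
    have := norm_theta_gauss (z + 1 / 2) τ hv
    simpa [th] using this
  | 2 =>
    have := norm_theta_gauss (z + τ / 2) τ hv
    refine le_trans (le_of_eq ?_) this
    simp only [th]
    rw [norm_mul, mul_comm ‖Complex.exp _‖, mul_assoc, Complex.norm_exp, ← Real.exp_add]
    congr 2
    have e1 : (↑π * Complex.I * (τ / 4 + z)).re = -π * (τ.im / 4 + z.im) := by
      simp
      try ring
    have e2 : (z + τ / 2).im = z.im + τ.im / 2 := by
      simp
      try ring
    rw [e1, e2]
    field_simp
    ring

/-- Near the cusp the first two theta functions are exponentially close to `1` and the third is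
exponentially small, as long as `Im z` is small compared to `Im τ`. -/
lemma norm_th_small (z τ : ℂ) (hv : 4 / 5 ≤ τ.im) (hz : |z.im| ≤ τ.im / 16) :
    ‖th 0 z τ - 1‖ ≤ gaussC * Real.exp (-π * τ.im / 32) ∧
    ‖th 1 z τ - 1‖ ≤ gaussC * Real.exp (-π * τ.im / 32) ∧
    ‖th 2 z τ‖ ≤ gaussC * Real.exp (-π * τ.im / 32) := by
  have hv0 : 0 < τ.im := by linarith
  have key : ∀ z : ℂ, |z.im| ≤ τ.im / 16 →
      ‖jacobiTheta₂ z τ - 1‖ ≤ gaussC * Real.exp (-π * τ.im / 32) := by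
    intro z hz
    have hs := (summable_jacobiTheta₂_term_iff z τ).2 hv0
    have h0 : jacobiTheta₂ z τ - 1 = ∑' k : ℤ, if k = 0 then 0 else jacobiTheta₂_term k z τ := by
      rw [jacobiTheta₂, hs.tsum_eq_add_tsum_ite 0]
      simp [jacobiTheta₂_term]
    have hle : ∀ k : ℤ, ‖(if k = 0 then 0 else jacobiTheta₂_term k z τ)‖
        ≤ Real.exp (-π * k ^ 2 / 8) * Real.exp (-π * τ.im / 32) := by
      intro k
      split_ifs with h
      · simp; positivity
      · rw [norm_jacobiTheta₂_term, ← Real.exp_add]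
        apply Real.exp_le_exp.2
        have hk : (1 : ℝ) ≤ |(k : ℝ)| := by
          have : (1 : ℤ) ≤ |k| := Int.one_le_abs h
          exact_mod_cast this
        have hk2 : |(k : ℝ)| ^ 2 = (k : ℝ) ^ 2 := sq_abs _
        have h3 : -((k : ℝ) * z.im) ≤ |(k : ℝ)| * (τ.im / 16) := by
          calc -((k : ℝ) * z.im) ≤ |(k : ℝ) * z.im| := neg_le_abs _
            _ = |(k : ℝ)| * |z.im| := abs_mul _ _
            _ ≤ _ := by gcongr
        have h4 : -(k : ℝ) ^ 2 * τ.im - 2 * (k * z.im) ≤ -(k : ℝ) ^ 2 / 8 - τ.im / 32 := by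
          rw [← hk2] at *
          nlinarith [mul_le_mul_of_nonneg_right hk hv0.le, mul_nonneg (sub_nonneg.2 hk) hv0.le,
            mul_nonneg (mul_nonneg (sub_nonneg.2 hk) (abs_nonneg (k : ℝ))) hv0.le,
            mul_nonneg (sq_nonneg |(k : ℝ)|) (sub_nonneg.2 hv)]
        nlinarith [Real.pi_pos, mul_le_mul_of_nonneg_left h4 Real.pi_pos.le]
    rw [h0]
    have hs2 := summable_gauss.mul_right (Real.exp (-π * τ.im / 32))
    have hs3 := Summable.of_nonneg_of_le (fun _ => norm_nonneg _) hle hs2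
    calc _ ≤ _ := norm_tsum_le_tsum_norm hs3
      _ ≤ _ := hs3.tsum_le_tsum hle hs2
      _ = _ := tsum_mul_right
  refine ⟨key z hz, ?_, ?_⟩
  · have := key (z + 1 / 2) (by simpa using hz)
    simpa [th] using this
  · simp only [th]
    rw [jacobiTheta₂, ← tsum_mul_left]
    have g := gauss_shift (1 / 2) le_rfl (1 / 2)
    have hle : ∀ k : ℤ, ‖Complex.exp (↑π * Complex.I * (τ / 4 + z)) *
        jacobiTheta₂_term k (z + τ / 2) τ‖
        ≤ Real.exp (-π * (1 / 2) * (k + 1 / 2) ^ 2) * Real.exp (-π * τ.im / 32) := by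
      intro k
      rw [norm_mul, norm_jacobiTheta₂_term, Complex.norm_exp, ← Real.exp_add, ← Real.exp_add]
      apply Real.exp_le_exp.2
      have e1 : (↑π * Complex.I * (τ / 4 + z)).re = -π * (τ.im / 4 + z.im) := by
        simp
        try ring
      have e2 : (z + τ / 2).im = z.im + τ.im / 2 := by
        simp
        try ring
      rw [e1, e2]
      set K : ℝ := k + 1 / 2 with hK
      have hk : (1 / 2 : ℝ) ≤ |K| := by
        rcases le_or_gt 0 k with h | h
        · have : (0 : ℝ) ≤ k := by exact_mod_cast h
          rw [abs_of_nonneg] <;> linarith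
        · have : (k : ℝ) ≤ -1 := by exact_mod_cast Int.le_sub_one_of_lt h
          rw [abs_of_nonpos] <;> linarith
      have hk2 : |K| ^ 2 = K ^ 2 := sq_abs _
      have h3 : -(K * z.im) ≤ |K| * (τ.im / 16) := by
        calc -(K * z.im) ≤ |K * z.im| := neg_le_abs _
          _ = |K| * |z.im| := abs_mul _ _
          _ ≤ _ := by gcongr
      have h4 : -K ^ 2 * τ.im - 2 * (K * z.im) ≤ -(1 / 2) * K ^ 2 - τ.im / 32 := by
        rw [← hk2] at *
        nlinarith [mul_nonneg (sub_nonneg.2 hk) hv0.le,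
            mul_nonneg (mul_nonneg (sub_nonneg.2 hk) (abs_nonneg K)) hv0.le,
            mul_nonneg (sq_nonneg |K|) (sub_nonneg.2 hv)]
      have h5 : (k : ℝ) = K - 1 / 2 := by rw [hK]; ring
      rw [h5]
      nlinarith [Real.pi_pos, mul_le_mul_of_nonneg_left h4 Real.pi_pos.le]
    have hs2 := g.1.mul_right (Real.exp (-π * τ.im / 32))
    have hs3 := Summable.of_nonneg_of_le (fun _ => norm_nonneg _) hle hs2
    calc _ ≤ _ := norm_tsum_le_tsum_norm hs3
      _ ≤ _ := hs3.tsum_le_tsum hle hs2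
      _ = _ := tsum_mul_right
      _ ≤ _ := by gcongr; exact g.2

end

/-! ### Bounds for differences of theta products -/

section

variable {n : ℕ}

lemma thProd_bound (i : Fin 3) (s : ℂ) {y : EuclideanSpace ℝ (Fin n)} (hy : ‖y‖ = 1) (τ : ℂ)
    (hv : 1 / 2 ≤ τ.im) :
    Real.exp (-π * s.im ^ 2 / τ.im) * ‖thProd i s y τ‖ ≤ gaussC ^ n := by
  have h : ∑ j, (y j) ^ 2 = 1 := by
    have := EuclideanSpace.real_norm_sq_eq y
    rw [hy] at this; linarith
  have him : ∀ j, (s * (y j : ℂ)).im = s.im * y j := fun j => Complex.im_mul_ofReal _ _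
  have hexp : Real.exp (-π * s.im ^ 2 / τ.im)
      = ∏ j, Real.exp (-π * (s * (y j : ℂ)).im ^ 2 / τ.im) := by
    rw [← Real.exp_sum]
    congr 1
    calc _ = (-π * s.im ^ 2 / τ.im) * ∑ j, (y j) ^ 2 := by rw [h, mul_one]
      _ = _ := by
        rw [Finset.mul_sum]
        refine Finset.sum_congr rfl fun j _ => ?_
        rw [him]; ring
  rw [hexp, thProd, norm_prod, ← Finset.prod_mul_distrib]
  calc _ ≤ ∏ _j : Fin n, gaussC := by
        refine Finset.prod_le_prod (fun j _ => by positivity) fun j _ => ?_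
        rw [mul_comm]
        exact norm_th_gauss i _ τ hv
    _ = gaussC ^ n := by simp

/-- Near the cusp the theta products approach limits (`1`, `1`, `0`) that do not depend on `y`. -/
lemma thProd_small (hn : 1 ≤ n) (s : ℂ) {y : EuclideanSpace ℝ (Fin n)} (hy : ‖y‖ = 1) (τ : ℂ)
    (hv : 4 / 5 ≤ τ.im) (hs : |s.im| ≤ τ.im / 16) (i : Fin 3) :
    ‖thProd i s y τ - (if i = 2 then 0 else 1)‖
      ≤ (n * gaussC * Real.exp (n * gaussC) + gaussC ^ n) * Real.exp (-π * τ.im / 32) := by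
  have hyj : ∀ j, |y j| ≤ 1 := fun j => by
    have := PiLp.norm_apply_le y j
    rwa [hy, Real.norm_eq_abs] at this
  have him : ∀ j, |(s * (y j : ℂ)).im| ≤ τ.im / 16 := fun j => by
    rw [Complex.im_mul_ofReal, abs_mul]
    calc |s.im| * |y j| ≤ |s.im| * 1 := by gcongr; exact hyj j
      _ ≤ _ := by rwa [mul_one]
  have hg := one_le_gaussC
  set E := Real.exp (-π * τ.im / 32) with hE
  have hE0 : 0 < E := Real.exp_pos _
  have hE1 : E ≤ 1 := by
    rw [hE, Real.exp_le_one_iff]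
    have := Real.pi_pos
    have : 0 ≤ π * τ.im := by positivity
    linarith
  have hsm := fun j => norm_th_small (s * y j) τ hv (him j)
  have hprod : ∀ i : Fin 3, (∀ j, ‖th i (s * y j) τ - 1‖ ≤ gaussC * E) →
      ‖thProd i s y τ - 1‖ ≤ (n * gaussC * Real.exp (n * gaussC) + gaussC ^ n) * E := by
    intro i hi
    have h1 := Finset.norm_prod_one_add_sub_one_le Finset.univ (fun j => th i (s * y j) τ - 1)
    simp only [add_sub_cancel] at h1
    have h2 : ∑ j, ‖th i (s * y j) τ - 1‖ ≤ n * gaussC * E := by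
      calc _ ≤ ∑ _j : Fin n, gaussC * E := Finset.sum_le_sum fun j _ => hi j
        _ = _ := by simp; ring
    have h3 : ∀ x : ℝ, Real.exp x - 1 ≤ x * Real.exp x := by
      intro x
      have := Real.add_one_le_exp (-x)
      have h4 : Real.exp (-x) * Real.exp x = 1 := by rw [← Real.exp_add]; simp
      nlinarith [Real.exp_pos x]
    calc _ ≤ _ := h1
      _ ≤ Real.exp (n * gaussC * E) - 1 := by gcongr
      _ ≤ n * gaussC * E * Real.exp (n * gaussC * E) := h3 _
      _ ≤ n * gaussC * E * Real.exp (n * gaussC) := by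
          exact mul_le_mul_of_nonneg_left (Real.exp_le_exp.2
            (mul_le_of_le_one_right (by positivity) hE1)) (by positivity)
      _ ≤ _ := by nlinarith [pow_pos (show 0 < gaussC by linarith) n]
  match i with
  | 0 => simpa using hprod 0 fun j => (hsm j).1
  | 1 => simpa using hprod 1 fun j => (hsm j).2.1
  | 2 =>
    simp only [if_true, sub_zero, thProd, norm_prod]
    calc _ ≤ ∏ _j : Fin n, gaussC * E :=
          Finset.prod_le_prod (fun j _ => by positivity) fun j _ => (hsm j).2.2
      _ = gaussC ^ n * E ^ n := by simp [mul_pow]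
      _ ≤ gaussC ^ n * E := by
          gcongr
          exact pow_le_of_le_one hE0.le hE1 (by omega)
      _ ≤ _ := by
          gcongr
          have : 0 ≤ (n : ℝ) * gaussC * Real.exp (n * gaussC) := by positivity
          linarith

/-- The exponential decay near the cusp absorbs the factor `(Im τ)^(n/4)`. -/
lemma rpow_exp_bound (hn : 1 ≤ n) (v : ℝ) (hv : 0 < v) :
    v ^ ((n : ℝ) / 4) * Real.exp (-π * v / 32) ≤ (4 * n : ℝ) ^ ((n : ℝ) / 4) := by
  have hn' : (0 : ℝ) < n := by exact_mod_cast hn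
  have h1 : v ≤ 4 * n * Real.exp (v / (4 * n)) := by
    have := Real.add_one_le_exp (v / (4 * n))
    have h2 : v = 4 * n * (v / (4 * n)) := by field_simp
    calc v = 4 * n * (v / (4 * n)) := h2
      _ ≤ _ := by gcongr; linarith
  calc _ ≤ (4 * n * Real.exp (v / (4 * n))) ^ ((n : ℝ) / 4) * Real.exp (-π * v / 32) := by
        gcongr
    _ = (4 * n : ℝ) ^ ((n : ℝ) / 4) * (Real.exp (v / 16) * Real.exp (-π * v / 32)) := by
        rw [Real.mul_rpow (by positivity) (by positivity), ← Real.exp_mul, mul_assoc]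
        congr 3
        field_simp
        norm_num
    _ ≤ (4 * n : ℝ) ^ ((n : ℝ) / 4) * 1 := by
        gcongr
        rw [← Real.exp_add, Real.exp_le_one_iff]
        nlinarith [Real.pi_gt_three]
    _ = _ := mul_one _

/-- The bound for `thDiff` on `Im τ ≥ √3/2`: the Gaussian bound `thProd_bound` is used for
`Im τ ≤ 256 κ`, and the cancellation of the limits at the cusp (`thProd_small`) above. -/
lemma thDiff_fd (hn : 1 ≤ n) : ∃ C : ℝ, 0 ≤ C ∧ ∀ y w : EuclideanSpace ℝ (Fin n), ‖y‖ = 1 → ‖w‖ = 1 →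
    ∀ κ : ℝ, 1 ≤ κ → ∀ τ : ℂ, √3 / 2 ≤ τ.im → ∀ s : ℂ, ‖s‖ ^ 2 ≤ κ * τ.im →
      thDiff y w s τ ≤ C * κ ^ ((n : ℝ) / 4) := by
  have hg := one_le_gaussC
  set C3 : ℝ := n * gaussC * Real.exp (n * gaussC) + gaussC ^ n with hC3
  have hC30 : 0 ≤ C3 := by positivity
  refine ⟨6 * gaussC ^ n * 256 ^ ((n : ℝ) / 4) + 6 * C3 * (4 * n : ℝ) ^ ((n : ℝ) / 4),
    by positivity, ?_⟩
  intro y w hy hw κ hκ τ hτ s hs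
  have hv : 4 / 5 ≤ τ.im := by
    have : (8 / 5 : ℝ) ≤ √3 := Real.le_sqrt_of_sq_le (by norm_num)
    linarith
  have hv0 : 0 < τ.im := by linarith
  have hκ1 : 1 ≤ κ ^ ((n : ℝ) / 4) := Real.one_le_rpow hκ (by positivity)
  rcases le_or_gt τ.im (256 * κ) with hc | hc
  · have hb : ∀ i, Real.exp (-π * s.im ^ 2 / τ.im) * ‖thProd i s y τ - thProd i s w τ‖
        ≤ 2 * gaussC ^ n := by
      intro i
      calc _ ≤ Real.exp (-π * s.im ^ 2 / τ.im) * (‖thProd i s y τ‖ + ‖thProd i s w τ‖) := by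
            gcongr; exact norm_sub_le _ _
        _ ≤ _ := by
            have h1 := thProd_bound i s hy τ (by linarith)
            have h2 := thProd_bound i s hw τ (by linarith)
            linarith
    have : thDiff y w s τ ≤ (256 * κ) ^ ((n : ℝ) / 4) * (6 * gaussC ^ n) := by
      unfold thDiff
      rw [mul_assoc, Finset.mul_sum]
      gcongr
      rw [Fin.sum_univ_three]
      linarith [hb 0, hb 1, hb 2]
    rw [Real.mul_rpow (by norm_num) (by positivity)] at this
    have h0 : 0 ≤ 6 * C3 * (4 * n : ℝ) ^ ((n : ℝ) / 4) * κ ^ ((n : ℝ) / 4) := by positivity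
    nlinarith
  · have hsi : |s.im| ≤ τ.im / 16 := by
      have h1 : |s.im| ≤ ‖s‖ := Complex.abs_im_le_norm s
      have h2 : ‖s‖ ^ 2 ≤ (τ.im / 16) ^ 2 := by nlinarith
      exact h1.trans (abs_le_of_sq_le_sq' h2 (by positivity)).2
    set E := Real.exp (-π * τ.im / 32) with hE
    have hb : ∀ i, ‖thProd i s y τ - thProd i s w τ‖ ≤ 2 * C3 * E := by
      intro i
      have h1 := thProd_small hn s hy τ hv hsi i
      have h2 := thProd_small hn s hw τ hv hsi i
      calc _ ≤ _ := norm_sub_le_norm_sub_add_norm_sub _ (if i = 2 then (0 : ℂ) else 1) _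
        _ ≤ _ := by
          rw [norm_sub_rev _ (thProd i s w τ)]
          linarith
    have hexp1 : Real.exp (-π * s.im ^ 2 / τ.im) ≤ 1 := by
      rw [Real.exp_le_one_iff, neg_mul, neg_div, neg_nonpos]
      positivity
    have : thDiff y w s τ ≤ 6 * C3 * (4 * n : ℝ) ^ ((n : ℝ) / 4) := by
      calc thDiff y w s τ ≤ τ.im ^ ((n : ℝ) / 4) * 1 * (6 * C3 * E) := by
            unfold thDiff
            gcongr
            rw [Fin.sum_univ_three]
            linarith [hb 0, hb 1, hb 2]
        _ = 6 * C3 * (τ.im ^ ((n : ℝ) / 4) * E) := by ring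
        _ ≤ _ := by gcongr; exact rpow_exp_bound hn _ hv0
    have h0 : 0 ≤ 6 * gaussC ^ n * 256 ^ ((n : ℝ) / 4) := by positivity
    have h1 : 0 ≤ 6 * C3 * (4 * n : ℝ) ^ ((n : ℝ) / 4) := by positivity
    nlinarith

lemma thDiff_bound (hn : 1 ≤ n) : ∃ C : ℝ, 0 ≤ C ∧ ∀ y w : EuclideanSpace ℝ (Fin n),
    ‖y‖ = 1 → ‖w‖ = 1 → ∀ κ : ℝ, 1 ≤ κ → ∀ τ : ℂ, 0 < τ.im → ∀ s : ℂ, ‖s‖ ^ 2 ≤ κ * τ.im →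
      thDiff y w s τ ≤ C * κ ^ ((n : ℝ) / 4) := by
  obtain ⟨C, hC, h⟩ := thDiff_fd hn
  exact ⟨C, hC, fun y w hy hw κ hκ τ hτ s hs =>
    thDiff_le_of_fd hy hw κ _ (fun τ hτ s hs => h y w hy hw κ hκ τ hτ s hs) τ hτ s hs⟩

end

/-! ### Exponential sums over the points of the sphere of radius `√m` -/

section

/-- Distributivity of a finite product over absolutely convergent sums. -/
lemma prod_tsum_pi (n : ℕ) (f : Fin n → ℤ → ℂ) (hf : ∀ j, Summable fun k => ‖f j k‖) :
    (Summable fun x : Fin n → ℤ => ‖∏ j, f j (x j)‖) ∧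
    ∑' x : Fin n → ℤ, ∏ j, f j (x j) = ∏ j, ∑' k, f j k := by
  induction n with
  | zero =>
    refine ⟨?_, ?_⟩
    · exact (hasSum_fintype _).summable
    · simp
  | succ n ih =>
    obtain ⟨h1, h2⟩ := ih (fun j => f j.succ) (fun j => hf j.succ)
    obtain ⟨e, he⟩ : ∃ e : ℤ × (Fin n → ℤ) ≃ (Fin (n + 1) → ℤ),
        ∀ p, ∏ j, f j (e p j) = f 0 p.1 * ∏ j, f j.succ (p.2 j) := by
      refine ⟨⟨fun p => Fin.cons p.1 p.2, fun x => (x 0, fun j => x j.succ), fun p => ?_,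
        fun x => ?_⟩, fun p => ?_⟩
      · simp
      · exact Fin.cons_self_tail x
      · rw [Fin.prod_univ_succ]
        rfl
    have hg : Summable fun p : ℤ × (Fin n → ℤ) => ‖f 0 p.1 * ∏ j, f j.succ (p.2 j)‖ :=
      (Summable.mul_of_nonneg (hf 0) h1 (fun _ => norm_nonneg _) fun _ => norm_nonneg _).congr
        fun p => (norm_mul _ _).symm
    refine ⟨?_, ?_⟩
    · refine (e.summable_iff).1 (hg.congr fun p => ?_)
      exact (congrArg norm (he p)).symm
    · rw [← e.tsum_eq, tsum_congr he, Fin.prod_univ_succ, ← h2]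
      exact (tsum_mul_tsum_of_summable_norm (hf 0) h1).symm

variable {n : ℕ}

/-- Integer vectors `x` with `|x|² = m`. -/
def pts (n m : ℕ) : Finset (Fin n → ℤ) :=
  (Fintype.piFinset fun _ => Finset.Icc (-(m : ℤ)) m).filter fun x => ∑ i, x i ^ 2 = (m : ℤ)

lemma mem_pts {m : ℕ} {x : Fin n → ℤ} : x ∈ pts n m ↔ ∑ i, x i ^ 2 = (m : ℤ) := by
  simp only [pts, Finset.mem_filter, Fintype.mem_piFinset, Finset.mem_Icc, and_iff_right_iff_imp]
  intro h i
  have h1 : x i ^ 2 ≤ m := by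
    rw [← h]
    exact Finset.single_le_sum (f := fun i => x i ^ 2) (fun i _ => sq_nonneg _) (Finset.mem_univ i)
  constructor <;> nlinarith

/-- The general term of `thProd 0 s y τ` expanded over `ℤⁿ`. -/
def latTerm (s : ℂ) (y : EuclideanSpace ℝ (Fin n)) (τ : ℂ) (x : Fin n → ℤ) : ℂ :=
  ∏ j, jacobiTheta₂_term (x j) (s * y j) τ

lemma latTerm_eq (s : ℂ) (y : EuclideanSpace ℝ (Fin n)) (τ : ℂ) (x : Fin n → ℤ) :
    latTerm s y τ x = Complex.exp (2 * π * Complex.I * s * (∑ j, (x j : ℝ) * y j : ℝ)) *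
      Complex.exp (π * Complex.I * (∑ j, x j ^ 2 : ℤ) * τ) := by
  unfold latTerm jacobiTheta₂_term
  rw [← Complex.exp_sum, ← Complex.exp_add]
  congr 1
  push_cast
  rw [Finset.sum_add_distrib, Finset.mul_sum, Finset.mul_sum, Finset.sum_mul]
  congr 1
  exact Finset.sum_congr rfl fun j _ => by ring

lemma latTerm_tsum (s : ℂ) (y : EuclideanSpace ℝ (Fin n)) (τ : ℂ) (hτ : 0 < τ.im) :
    (Summable fun x => ‖latTerm s y τ x‖) ∧ ∑' x, latTerm s y τ x = thProd 0 s y τ :=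
  prod_tsum_pi n (fun j k => jacobiTheta₂_term k (s * y j) τ)
    fun j => ((summable_jacobiTheta₂_term_iff (s * y j) τ).2 hτ).norm

lemma integral_exp_period (N : ℤ) :
    ∫ u in Set.Ioc (0 : ℝ) 2, Complex.exp (π * Complex.I * N * u) = if N = 0 then 2 else 0 := by
  rw [← intervalIntegral.integral_of_le (by norm_num)]
  split_ifs with h
  · subst h; simp
  · have hc : (π : ℂ) * Complex.I * N ≠ 0 := by
      simp [Real.pi_ne_zero, h]
    rw [integral_exp_mul_complex hc]
    have : (π : ℂ) * Complex.I * N * (2 : ℝ) = N * (2 * π * Complex.I) := by push_cast; ring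
    rw [this, Complex.exp_int_mul_two_pi_mul_I]
    simp

lemma latTerm_split (s : ℂ) (y : EuclideanSpace ℝ (Fin n)) (u v : ℝ) (x : Fin n → ℤ) :
    latTerm s y (u + v * Complex.I) x =
      latTerm s y (v * Complex.I) x * Complex.exp (π * Complex.I * (∑ j, x j ^ 2 : ℤ) * u) := by
  have : Complex.exp (π * Complex.I * (∑ j, x j ^ 2 : ℤ) * (u + v * Complex.I)) =
      Complex.exp (π * Complex.I * (∑ j, x j ^ 2 : ℤ) * (v * Complex.I)) *
        Complex.exp (π * Complex.I * (∑ j, x j ^ 2 : ℤ) * u) := by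
    rw [← Complex.exp_add]
    congr 1
    ring
  rw [latTerm_eq, latTerm_eq, this]
  ring

/-- Integrating over a period in `Re τ` extracts the `m`-th Fourier coefficient of the theta series,
so a bound for the difference of two theta series on a horizontal line bounds the difference of
their coefficients. -/
lemma coeff_le (m : ℕ) (s : ℂ) (y w : EuclideanSpace ℝ (Fin n)) (v : ℝ) (hv : 0 < v) (B : ℝ)
    (hB : ∀ u : ℝ, ‖thProd 0 s y (u + v * Complex.I) - thProd 0 s w (u + v * Complex.I)‖ ≤ B) :
    ‖∑ x ∈ pts n m, (latTerm s y (v * Complex.I) x - latTerm s w (v * Complex.I) x)‖ ≤ B := by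
  have him : ∀ u : ℝ, ((u : ℂ) + v * Complex.I).im = v := fun u => by simp
  set D : (Fin n → ℤ) → ℂ := fun x => latTerm s y (v * Complex.I) x - latTerm s w (v * Complex.I) x
    with hD
  set F : (Fin n → ℤ) → ℝ → ℂ := fun x u =>
    D x * Complex.exp (π * Complex.I * ((∑ j, x j ^ 2 : ℤ) - m : ℤ) * u) with hF
  have hDs : Summable fun x => ‖D x‖ := by
    have h1 := (latTerm_tsum s y (v * Complex.I) (by simpa using hv)).1
    have h2 := (latTerm_tsum s w (v * Complex.I) (by simpa using hv)).1
    exact Summable.of_nonneg_of_le (fun _ => norm_nonneg _) (fun x => norm_sub_le _ _) (h1.add h2)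
  have hnE : ∀ (N : ℤ) (u : ℝ), ‖Complex.exp (π * Complex.I * N * u)‖ = 1 := by
    intro N u
    rw [show (π : ℂ) * Complex.I * N * u = ((π * N * u : ℝ) : ℂ) * Complex.I by push_cast; ring]
    exact Complex.norm_exp_ofReal_mul_I _
  have hnF : ∀ x u, ‖F x u‖ = ‖D x‖ := by
    intro x u
    simp only [hF]
    rw [norm_mul, hnE, mul_one]
  have hFi : ∀ x, Integrable (F x) (volume.restrict (Set.Ioc (0 : ℝ) 2)) := by
    intro x
    have : Continuous (F x) := by simp only [hF]; fun_prop
    exact (this.integrableOn_Icc (a := 0) (b := 2)).mono_set Set.Ioc_subset_Icc_self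
  have hsum := hasSum_integral_of_summable_integral_norm hFi (by
    simp only [hnF]
    simp only [integral_const]
    exact hDs.const_smul _)
  have hint : ∀ x, ∫ u in Set.Ioc (0 : ℝ) 2, F x u
      = if x ∈ pts n m then 2 * D x else 0 := by
    intro x
    simp only [hF]
    rw [integral_const_mul, integral_exp_period]
    simp only [sub_eq_zero, mem_pts]
    split_ifs <;> ring
  simp only [hint] at hsum
  have hfin : HasSum (fun x => if x ∈ pts n m then 2 * D x else 0) (∑ x ∈ pts n m, 2 * D x) := by
    have : HasSum (fun x => if x ∈ pts n m then 2 * D x else 0)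
        (∑ x ∈ pts n m, if x ∈ pts n m then 2 * D x else 0) := hasSum_sum_of_ne_finset_zero (f := fun x => if x ∈ pts n m then 2 * D x else 0)
      (s := pts n m) (fun x hx => by simp [hx])
    rwa [Finset.sum_congr rfl fun x hx => if_pos hx] at this
  have heq := hfin.unique hsum
  have htot : ∀ u : ℝ, ‖∑' x, F x u‖ ≤ B := by
    intro u
    have h1 := (latTerm_tsum s y (u + v * Complex.I) (by rw [him]; exact hv))
    have h2 := (latTerm_tsum s w (u + v * Complex.I) (by rw [him]; exact hv))
    have h3 : ∀ x, F x u = (latTerm s y (u + v * Complex.I) x - latTerm s w (u + v * Complex.I) x)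
        * Complex.exp (π * Complex.I * (-m : ℤ) * u) := by
      intro x
      simp only [hF, hD]
      rw [latTerm_split s y u v x, latTerm_split s w u v x, ← sub_mul]
      have : Complex.exp (π * Complex.I * ((∑ j, x j ^ 2 : ℤ) - m : ℤ) * u) =
          Complex.exp (π * Complex.I * (∑ j, x j ^ 2 : ℤ) * u)
            * Complex.exp (π * Complex.I * (-m : ℤ) * u) := by
        rw [← Complex.exp_add]
        congr 1
        rw [Int.cast_sub, Int.cast_neg]
        ring
      rw [this]
      ring
    simp only [h3]
    rw [tsum_mul_right, norm_mul, hnE, mul_one, h1.1.of_norm.tsum_sub h2.1.of_norm, h1.2, h2.2]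
    exact hB u
  have hle := norm_setIntegral_le_of_norm_le_const (μ := volume) (s := Set.Ioc (0 : ℝ) 2)
    (f := fun u => ∑' x, F x u) (C := B) (by simp) (fun u _ => htot u)
  rw [← heq, ← Finset.mul_sum, norm_mul] at hle
  simp at hle
  linarith

/-- The exponential sums over `|x|² = m` in two directions `y` and `w` differ by `O(m^(n/4) e^t)`: this
is `coeff_le` at height `Im τ = t / (2πm)` with `s = -i t / (2π√m)`. -/
theorem weyl_bound (hn : 1 ≤ n) : ∃ C : ℝ, 0 ≤ C ∧ ∀ m : ℕ, 1 ≤ m → ∀ t : ℝ, 1 ≤ t →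
    ∀ y w : EuclideanSpace ℝ (Fin n), ‖y‖ = 1 → ‖w‖ = 1 →
    ∑ x ∈ pts n m, Real.exp (t / √m * ∑ j, (x j : ℝ) * y j) ≤
      ∑ x ∈ pts n m, Real.exp (t / √m * ∑ j, (x j : ℝ) * w j)
        + C * (m : ℝ) ^ ((n : ℝ) / 4) * Real.exp t := by
  obtain ⟨C, hC, h⟩ := thDiff_bound hn
  refine ⟨C * (2 * π) ^ ((n : ℝ) / 4), by positivity, ?_⟩
  intro m hm t ht y w hy hw
  have hm0 : (0 : ℝ) < m := by exact_mod_cast hm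
  have ht0 : 0 < t := by linarith
  have hpi := Real.pi_pos
  set v : ℝ := t / (2 * π * m) with hv
  have hv0 : 0 < v := by positivity
  set b : ℝ := -(t / (2 * π * √m)) with hb
  set s : ℂ := b * Complex.I with hs
  have hsm : √(m : ℝ) ^ 2 = m := Real.sq_sqrt hm0.le
  have hsm0 : 0 < √(m : ℝ) := Real.sqrt_pos.2 hm0
  have hb2 : b ^ 2 = t / (2 * π) * v := by
    rw [hb, hv, neg_sq, div_pow, mul_pow, hsm]
    field_simp
    try ring
  have hsim : s.im = b := by simp [hs]
  have hsn : ‖s‖ ^ 2 = b ^ 2 := by simp [hs]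
  have hB : ∀ u : ℝ, ‖thProd 0 s y (u + v * Complex.I) - thProd 0 s w (u + v * Complex.I)‖
      ≤ C * (2 * π) ^ ((n : ℝ) / 4) * (m : ℝ) ^ ((n : ℝ) / 4) * Real.exp (t / 2) := by
    intro u
    have him : ((u : ℂ) + v * Complex.I).im = v := by simp
    have h1 := h y w hy hw t ht (u + v * Complex.I) (by rw [him]; exact hv0) s (by
      rw [hsn, him, hb2]
      have : t / (2 * π) ≤ t := div_le_self ht0.le (by nlinarith [Real.pi_gt_three])
      gcongr)
    have h2 : v ^ ((n : ℝ) / 4) * Real.exp (-(t / 2)) *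
        ‖thProd 0 s y (u + v * Complex.I) - thProd 0 s w (u + v * Complex.I)‖
        ≤ C * t ^ ((n : ℝ) / 4) := by
      refine le_trans ?_ h1
      unfold thDiff
      rw [him, hsim, hb2]
      have : -π * (t / (2 * π) * v) / v = -(t / 2) := by field_simp
      rw [this]
      gcongr
      exact Finset.single_le_sum
        (f := fun i => ‖thProd i s y (u + v * Complex.I) - thProd i s w (u + v * Complex.I)‖)
        (fun i _ => norm_nonneg _) (Finset.mem_univ 0)
    have h3 : t ^ ((n : ℝ) / 4) = v ^ ((n : ℝ) / 4) * ((2 * π) ^ ((n : ℝ) / 4) * (m : ℝ) ^ ((n : ℝ) / 4)) := by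
      rw [← Real.mul_rpow (by positivity) hm0.le, ← Real.mul_rpow hv0.le (by positivity)]
      congr 1
      rw [hv]; field_simp
    rw [h3] at h2
    have h4 : 0 < v ^ ((n : ℝ) / 4) := by positivity
    have h5 : Real.exp (-(t / 2)) * ‖thProd 0 s y (u + v * Complex.I) - thProd 0 s w (u + v * Complex.I)‖
        ≤ C * (2 * π) ^ ((n : ℝ) / 4) * (m : ℝ) ^ ((n : ℝ) / 4) := by
      refine le_of_mul_le_mul_left ?_ h4
      linarith
    rw [Real.exp_neg, inv_mul_le_iff₀ (Real.exp_pos _)] at h5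
    linarith
  have hc := coeff_le m s y w v hv0 _ hB
  have hterm : ∀ y : EuclideanSpace ℝ (Fin n), ∀ x ∈ pts n m, latTerm s y (v * Complex.I) x
      = ((Real.exp (-(t / 2)) * Real.exp (t / √m * ∑ j, (x j : ℝ) * y j) : ℝ) : ℂ) := by
    intro y x hx
    rw [latTerm_eq, mem_pts.1 hx, ← Real.exp_add, ← Complex.exp_add, Complex.ofReal_exp]
    congr 1
    have e1 : 2 * (π : ℂ) * Complex.I * s * ((∑ j, (x j : ℝ) * y j : ℝ) : ℂ)
        = ((t / √m * ∑ j, (x j : ℝ) * y j : ℝ) : ℂ) := by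
      rw [hs, show 2 * (π : ℂ) * Complex.I * (b * Complex.I) = ((2 * π * b : ℝ) : ℂ) * (Complex.I * Complex.I) by
        push_cast; ring, Complex.I_mul_I, mul_neg_one, ← Complex.ofReal_neg, ← Complex.ofReal_mul]
      congr 2
      rw [hb]; field_simp
    have e2 : (π : ℂ) * Complex.I * ((m : ℤ) : ℂ) * (v * Complex.I) = ((-(t / 2) : ℝ) : ℂ) := by
      rw [show (π : ℂ) * Complex.I * ((m : ℤ) : ℂ) * (v * Complex.I) = ((π * m * v : ℝ) : ℂ) * (Complex.I * Complex.I) by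
        push_cast; ring, Complex.I_mul_I, mul_neg_one, ← Complex.ofReal_neg]
      congr 2
      rw [hv]; field_simp
    rw [e1, e2]
    push_cast
    ring
  rw [Finset.sum_sub_distrib, Finset.sum_congr rfl (hterm y), Finset.sum_congr rfl (hterm w),
    ← Complex.ofReal_sum, ← Complex.ofReal_sum, ← Complex.ofReal_sub, Complex.norm_real,
    ← Finset.mul_sum, ← Finset.mul_sum, ← mul_sub, Real.norm_eq_abs, abs_mul,
    abs_of_pos (Real.exp_pos _), Real.exp_neg, inv_mul_le_iff₀ (Real.exp_pos _)] at hc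
  have h6 := (le_abs_self _).trans hc
  have h7 : Real.exp t = Real.exp (t / 2) * Real.exp (t / 2) := by
    rw [← Real.exp_add]; congr 1; ring
  rw [h7]
  linarith

end

/-! ### Matrix representations of quaternions modulo an odd number -/

section

/-- `-1` is a sum of two squares modulo every odd `u`: by Dirichlet there is a prime
`q ≡ 2 * u² - 1` modulo `4 * u`; it is `1` modulo `4`, hence a sum of two squares, and `-1` modulo `u`. -/
lemma exists_sq_add_sq_neg_one (u : ℕ) (hu : Odd u) : ∃ α β : ZMod u, α ^ 2 + β ^ 2 = -1 := by
  have hu0 : 0 < u := hu.pos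
  have : NeZero (4 * u) := ⟨by omega⟩
  have hpos : 1 ≤ 2 * u ^ 2 := by nlinarith
  have hcop : Nat.Coprime (2 * u ^ 2 - 1) (4 * u) := by
    have h1 : Nat.Coprime (2 * u ^ 2 - 1) (2 * u ^ 2) := by
      have := (Nat.coprime_self_sub_left hpos).2 (Nat.coprime_one_left (2 * u ^ 2))
      simpa using this
    have h2 : Nat.Coprime (2 * u ^ 2 - 1) 2 := h1.coprime_dvd_right (Dvd.intro _ rfl)
    have h3 : Nat.Coprime (2 * u ^ 2 - 1) u := h1.coprime_dvd_right ⟨2 * u, by ring⟩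
    exact ((h2.mul_right h2).mul_right h3)
  have hunit : IsUnit ((2 * u ^ 2 - 1 : ℕ) : ZMod (4 * u)) := (ZMod.isUnit_iff_coprime _ _).2 hcop
  obtain ⟨q, -, hq, hqa⟩ := Nat.forall_exists_prime_gt_and_eq_mod hunit 0
  have hmod : q ≡ 2 * u ^ 2 - 1 [MOD 4 * u] := (ZMod.natCast_eq_natCast_iff _ _ _).1 hqa
  have h4 : q ≡ 2 * u ^ 2 - 1 [MOD 4] := hmod.of_dvd ⟨u, rfl⟩
  have hU : q ≡ 2 * u ^ 2 - 1 [MOD u] := hmod.of_dvd ⟨4, by ring⟩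
  have hq4 : q % 4 ≠ 3 := by
    obtain ⟨k, rfl⟩ := hu
    have : 2 * (2 * k + 1) ^ 2 - 1 = 4 * (2 * k ^ 2 + 2 * k) + 1 := by
      have : 2 * (2 * k + 1) ^ 2 = 4 * (2 * k ^ 2 + 2 * k) + 2 := by ring
      omega
    rw [this] at h4
    have : q % 4 = (4 * (2 * k ^ 2 + 2 * k) + 1) % 4 := h4
    omega
  have := Fact.mk hq
  obtain ⟨a, b, hab⟩ := Nat.Prime.sq_add_sq hq4
  refine ⟨a, b, ?_⟩
  have e : ((q : ℕ) : ZMod u) = ((2 * u ^ 2 - 1 : ℕ) : ZMod u) := (ZMod.natCast_eq_natCast_iff _ _ _).2 hU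
  rw [← hab, Nat.cast_sub hpos] at e
  push_cast at e
  rw [e]
  simp

open Quaternion

/-- For `α² + β² = -1` in `R`, the representation `i ↦ !![α, β; β, -α]`, `j ↦ !![0, -1; 1, 0]` of
the Lipschitz quaternions by `2 × 2` matrices over `R`. -/
def quatRep {R : Type*} [CommRing R] (α β : R) (x : ℍ[ℤ]) : Matrix (Fin 2) (Fin 2) R :=
  !![x.re + x.imI * α + x.imK * β, x.imI * β - x.imJ - x.imK * α;
     x.imI * β + x.imJ - x.imK * α, x.re - x.imI * α - x.imK * β]

section rep
variable {R : Type*} [CommRing R] {α β : R}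

lemma quatRep_mul (h : α ^ 2 + β ^ 2 = -1) (x y : ℍ[ℤ]) :
    quatRep α β (x * y) = quatRep α β x * quatRep α β y := by
  have h' : α ^ 2 = -1 - β ^ 2 := by linear_combination h
  ext i j
  fin_cases i <;> fin_cases j <;>
    simp [quatRep, Matrix.mul_apply, Fin.sum_univ_two] <;> ring_nf <;> rw [h'] <;> ring

lemma quatRep_add (x y : ℍ[ℤ]) : quatRep α β (x + y) = quatRep α β x + quatRep α β y := by
  ext i j
  fin_cases i <;> fin_cases j <;> simp [quatRep] <;> ring

lemma quatRep_neg (x : ℍ[ℤ]) : quatRep α β (-x) = -quatRep α β x := by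
  ext i j
  fin_cases i <;> fin_cases j <;> simp [quatRep] <;> ring

lemma quatRep_star (x : ℍ[ℤ]) : quatRep α β (star x) = (quatRep α β x).adjugate := by
  rw [Matrix.adjugate_fin_two]
  ext i j
  fin_cases i <;> fin_cases j <;> simp [quatRep] <;> ring

lemma quatRep_det (h : α ^ 2 + β ^ 2 = -1) (x : ℍ[ℤ]) :
    (quatRep α β x).det = ((x.re ^ 2 + x.imI ^ 2 + x.imJ ^ 2 + x.imK ^ 2 : ℤ) : R) := by
  rw [Matrix.det_fin_two]
  simp [quatRep]
  linear_combination (-(x.imI : R) ^ 2 - (x.imK : R) ^ 2) * h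

/-- When `2` is invertible the representation is faithful modulo the characteristic. -/
lemma quatRep_eq_zero (h : α ^ 2 + β ^ 2 = -1) {c : R} (hc : c * 2 = 1) {x : ℍ[ℤ]}
    (hx : quatRep α β x = 0) :
    (x.re : R) = 0 ∧ (x.imI : R) = 0 ∧ (x.imJ : R) = 0 ∧ (x.imK : R) = 0 := by
  have h00 := congrFun (congrFun hx 0) 0
  have h01 := congrFun (congrFun hx 0) 1
  have h10 := congrFun (congrFun hx 1) 0
  have h11 := congrFun (congrFun hx 1) 1
  simp [quatRep] at h00 h01 h10 h11
  have hX : (x.imI : R) * α + x.imK * β = 0 := by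
    linear_combination c * (h00 - h11) - (x.imI * α + x.imK * β : R) * hc
  have hY : (x.imI : R) * β - x.imK * α = 0 := by
    linear_combination c * (h01 + h10) - (x.imI * β - x.imK * α : R) * hc
  refine ⟨?_, ?_, ?_, ?_⟩
  · linear_combination c * (h00 + h11) - (x.re : R) * hc
  · linear_combination -α * hX - β * hY + (x.imI : R) * h
  · linear_combination c * (h10 - h01) - (x.imJ : R) * hc
  · linear_combination -β * hX + α * hY + (x.imK : R) * h

/-- The rank-one matrix annihilating the column `(1, t)` lies in the image of the representation. -/
lemma quatRep_surj {u : ℕ} {α β : ZMod u} (h : α ^ 2 + β ^ 2 = -1) {c : ZMod u} (hc : c * 2 = 1)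
    (t : ZMod u) : ∃ v : ℍ[ℤ], quatRep α β v = !![t, -1; 0, 0] := by
  obtain ⟨a, ha⟩ := ZMod.intCast_surjective (c * t)
  obtain ⟨b, hb⟩ := ZMod.intCast_surjective (-(c * t * α - c * β))
  obtain ⟨e, he⟩ := ZMod.intCast_surjective c
  obtain ⟨d, hd⟩ := ZMod.intCast_surjective (-(c * t * β + c * α))
  refine ⟨⟨a, b, e, d⟩, ?_⟩
  ext i j
  fin_cases i <;> fin_cases j <;> simp [quatRep, ha, hb, he, hd]
  · linear_combination -c * t * h + t * hc
  · linear_combination c * h - hc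
  · linear_combination c * h
  · linear_combination c * t * h

end rep

end

/-! ### A short vector in the kernel of a homomorphism -/

section

open scoped Pointwise

/-- A form of Minkowski's theorem in dimension four, by Blichfeldt's averaging argument: the kernel of
a homomorphism to a group of order at most `u²` contains a nonzero vector of squared length less
than `2 * u`. -/
lemma exists_short_mem_ker {G : Type*} [AddCommGroup G] [Fintype G] {u : ℕ} (hu : 1 ≤ u)
    (hG : Fintype.card G ≤ u ^ 2) (f : (Fin 4 → ℤ) →+ G) :
    ∃ x : Fin 4 → ℤ, x ≠ 0 ∧ f x = 0 ∧ ∑ i, x i ^ 2 < 2 * (u : ℤ) := by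
  classical
  by_contra! H
  have hu0 : (0 : ℝ) < u := by exact_mod_cast hu
  set T : Set (Fin 4 → ℝ) := {x | ∑ i, x i ^ 2 < (u : ℝ) / 2} with hT
  have hTm : MeasurableSet T := measurableSet_lt (by fun_prop) measurable_const
  have hvol : volume T = ENNReal.ofReal (π ^ 2 * u ^ 2 / 8) := by
    have hpre : (WithLp.ofLp : EuclideanSpace ℝ (Fin 4) → Fin 4 → ℝ) ⁻¹' T
        = Metric.ball (0 : EuclideanSpace ℝ (Fin 4)) √(u / 2) := by
      ext x
      rw [mem_ball_zero_iff, Real.lt_sqrt (norm_nonneg _), EuclideanSpace.real_norm_sq_eq]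
      rfl
    have hG : Real.Gamma ((Fintype.card (Fin 4) : ℝ) / 2 + 1) = 2 := by
      rw [show ((Fintype.card (Fin 4) : ℝ) / 2 + 1) = ((2 : ℕ) : ℝ) + 1 by norm_num,
        Real.Gamma_nat_eq_factorial]
      norm_num
    rw [← (PiLp.volume_preserving_ofLp (Fin 4)).measure_preimage hTm.nullMeasurableSet, hpre,
      EuclideanSpace.volume_ball, hG, ← ENNReal.ofReal_pow (Real.sqrt_nonneg _),
      ← ENNReal.ofReal_mul (by positivity), Fintype.card_fin]
    congr 1
    rw [show √((u : ℝ) / 2) ^ 4 = (√((u : ℝ) / 2) ^ 2) ^ 2 by ring,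
      show √π ^ 4 = (√π ^ 2) ^ 2 by ring, Real.sq_sqrt (by positivity),
      Real.sq_sqrt Real.pi_pos.le]
    ring
  have hbig : (u : ENNReal) ^ 2 < volume T := by
    rw [hvol, show (u : ENNReal) ^ 2 = ENNReal.ofReal ((u : ℝ) ^ 2) by
      rw [ENNReal.ofReal_pow hu0.le, ENNReal.ofReal_natCast], ENNReal.ofReal_lt_ofReal_iff (by positivity)]
    have h9 : (9 : ℝ) < π ^ 2 := by nlinarith [Real.pi_gt_three]
    have h0 : 0 < (u : ℝ) ^ 2 := by positivity
    nlinarith [mul_lt_mul_of_pos_right h9 h0]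
  refine absurd hbig (not_lt.2 ?_)
  set b := Pi.basisFun ℝ (Fin 4) with hb
  have hF := ZSpan.isAddFundamentalDomain b (volume : Measure (Fin 4 → ℝ))
  have : VAddInvariantMeasure (Submodule.span ℤ (Set.range b)) (Fin 4 → ℝ) volume :=
    inferInstanceAs <| VAddInvariantMeasure (Submodule.span ℤ (Set.range b)).toAddSubgroup _ volume
  rw [hF.measure_eq_tsum T]
  have hz : ∀ g : Submodule.span ℤ (Set.range b), ∃ z : Fin 4 → ℤ, ∀ i, (g : Fin 4 → ℝ) i = z i := by
    intro g
    have := (b.mem_span_iff_repr_mem ℤ _).1 g.2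
    choose z hz using this
    exact ⟨z, fun i => by simpa [hb] using (hz i).symm⟩
  choose z hz using hz
  have hFm : MeasurableSet (ZSpan.fundamentalDomain b) := ZSpan.fundamentalDomain_measurableSet b
  have hcalc : ∀ g : Submodule.span ℤ (Set.range b), volume ((g +ᵥ T) ∩ ZSpan.fundamentalDomain b)
      = ∫⁻ x in ZSpan.fundamentalDomain b, (g +ᵥ T).indicator 1 x := by
    intro g
    rw [lintegral_indicator_one (hTm.const_vadd g), Measure.restrict_apply (hTm.const_vadd g)]
  simp only [hcalc]
  rw [← lintegral_tsum fun g => (measurable_one.indicator (hTm.const_vadd g)).aemeasurable]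
  have hpt : ∀ x : Fin 4 → ℝ, ∑' g : Submodule.span ℤ (Set.range b), (g +ᵥ T).indicator 1 x
      ≤ (u : ENNReal) ^ 2 := by
    intro x
    rw [ENNReal.tsum_eq_iSup_sum]
    refine iSup_le fun s => ?_
    simp only [Set.indicator_apply, Pi.one_apply]
    rw [Finset.sum_boole]
    have : (s.filter fun g => x ∈ g +ᵥ T).card ≤ Fintype.card G := by
      rw [← Finset.card_univ]
      refine Finset.card_le_card_of_injOn (fun g => f (z g)) (fun _ _ => Finset.mem_coe.2 (Finset.mem_univ _)) ?_
      intro g hg g' hg' hgg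
      simp only [Finset.coe_filter, Set.mem_ofPred_eq, Set.mem_vadd_set_iff_neg_vadd_mem] at hg hg'
      have h1 : ∑ i, (x i - z g i) ^ 2 < (u : ℝ) / 2 := by
        refine lt_of_eq_of_lt (Finset.sum_congr rfl fun i _ => ?_) hg.2
        rw [← hz]
        simp [Submodule.vadd_def, sub_eq_neg_add]
      have h2 : ∑ i, (x i - z g' i) ^ 2 < (u : ℝ) / 2 := by
        refine lt_of_eq_of_lt (Finset.sum_congr rfl fun i _ => ?_) hg'.2
        rw [← hz]
        simp [Submodule.vadd_def, sub_eq_neg_add]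
      have h3 : ∑ i, ((z g - z g') i) ^ 2 < 2 * (u : ℤ) := by
        have : ((∑ i, ((z g - z g') i) ^ 2 : ℤ) : ℝ) < 2 * u := by
          push_cast
          have : ∑ i, ((z g i : ℝ) - z g' i) ^ 2 ≤
              ∑ i, (2 * (x i - z g i) ^ 2 + 2 * (x i - z g' i) ^ 2) :=
            Finset.sum_le_sum fun i _ => by
              nlinarith [sq_nonneg ((x i - z g i) + (x i - z g' i))]
          rw [Finset.sum_add_distrib, ← Finset.mul_sum, ← Finset.mul_sum] at this
          simp only [Pi.sub_apply, Int.cast_sub]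
          linarith
        exact_mod_cast this
      have h4 : z g = z g' := by
        by_contra hne
        have hne' : z g - z g' ≠ 0 := sub_ne_zero.2 hne
        have := H (z g - z g') hne' (by rw [map_sub, sub_eq_zero]; exact hgg)
        linarith
      ext i
      rw [hz, hz, h4]
    exact_mod_cast this.trans hG
  calc _ ≤ ∫⁻ x in ZSpan.fundamentalDomain b, (u : ENNReal) ^ 2 := lintegral_mono hpt
    _ = _ := by
      rw [setLIntegral_const, ZSpan.volume_fundamentalDomain]
      have : (Matrix.of ⇑b) = 1 := by
        ext i j; simp [hb, Matrix.one_apply, Pi.single_apply, eq_comm]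
      rw [this]; simp

end

/-! ### Representations by four squares -/

section

open Quaternion Matrix

lemma mulVec_quatRep {R : Type*} [CommRing R] {α β : R} (x : ℍ[ℤ]) (t : R) :
    quatRep α β x *ᵥ ![1, t] = ![quatRep α β x 0 0 + quatRep α β x 0 1 * t,
      quatRep α β x 1 0 + quatRep α β x 1 1 * t] := by
  ext i
  fin_cases i <;> simp [Matrix.mulVec, dotProduct, Fin.sum_univ_two]

/-- If `x` annihilates the column `(1, t)`, then the rank-one matrix with the same kernel, multiplied
by the image of `star x`, vanishes, since `star` acts as the adjugate. -/
lemma mul_quatRep_star {R : Type*} [CommRing R] {α β : R} (x : ℍ[ℤ]) (t : R)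
    (h : quatRep α β x *ᵥ ![1, t] = 0) :
    (!![t, -1; 0, 0] : Matrix (Fin 2) (Fin 2) R) * quatRep α β (star x) = 0 := by
  rw [mulVec_quatRep] at h
  have h0 := congrFun h 0
  have h1 := congrFun h 1
  simp only [Matrix.cons_val_zero, Matrix.cons_val_one, Pi.zero_apply] at h0 h1
  rw [quatRep_star, Matrix.adjugate_fin_two]
  ext i j
  fin_cases i <;> fin_cases j <;> simp [Matrix.mul_apply, Fin.sum_univ_two]
  · linear_combination h1
  · linear_combination -h0

/-- The quaternion with given integer coordinates. -/
def toQuat (x : Fin 4 → ℤ) : ℍ[ℤ] := ⟨x 0, x 1, x 2, x 3⟩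

lemma star_mul_self_quat (a : ℍ[ℤ]) :
    star a * a = ((a.re ^ 2 + a.imI ^ 2 + a.imJ ^ 2 + a.imK ^ 2 : ℤ) : ℍ[ℤ]) := by
  ext
  · rw [Quaternion.re_intCast, Quaternion.re_mul]; simp; ring
  · rw [Quaternion.imI_intCast, Quaternion.imI_mul]; simp; ring
  · rw [Quaternion.imJ_intCast, Quaternion.imJ_mul]; simp; ring
  · rw [Quaternion.imK_intCast, Quaternion.imK_mul]; simp; ring

lemma exists_eq_smul {u : ℕ} {z : ℍ[ℤ]} (h : (z.re : ZMod u) = 0 ∧ (z.imI : ZMod u) = 0 ∧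
    (z.imJ : ZMod u) = 0 ∧ (z.imK : ZMod u) = 0) : ∃ w : ℍ[ℤ], z = (u : ℤ) • w := by
  simp only [ZMod.intCast_zmod_eq_zero_iff_dvd] at h
  obtain ⟨⟨a, ha⟩, ⟨b, hb⟩, ⟨c, hc⟩, ⟨d, hd⟩⟩ := h
  exact ⟨⟨a, b, c, d⟩, by ext <;> [rw [ha]; rw [hb]; rw [hc]; rw [hd]] <;> rfl⟩

/-- A quaternion of norm `u` annihilating the column `(1, t)` generates the left ideal of all such
quaternions, and this ideal determines `t`. -/
lemma quat_line_unique {u : ℕ} (hu : Odd u) {α β : ZMod u} (h : α ^ 2 + β ^ 2 = -1) {c : ZMod u}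
    (hc : c * 2 = 1) {x : ℍ[ℤ]} (hx : star x * x = ((u : ℤ) : ℍ[ℤ])) {t t' : ZMod u}
    (ht : quatRep α β x *ᵥ ![1, t] = 0) (ht' : quatRep α β x *ᵥ ![1, t'] = 0) : t = t' := by
  obtain ⟨v, hv⟩ := quatRep_surj h hc t
  have h1 : quatRep α β (v * star x) = 0 := by
    rw [quatRep_mul h, hv, mul_quatRep_star x t ht]
  obtain ⟨w, hw⟩ := exists_eq_smul (quatRep_eq_zero h hc h1)
  have h2 : (u : ℤ) • v = (u : ℤ) • (w * x) := by
    rw [← smul_mul_assoc, ← hw, mul_assoc, hx, zsmul_eq_mul]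
    exact Int.cast_commute _ _
  have hu0 : (u : ℤ) ≠ 0 := by exact_mod_cast hu.pos.ne'
  have h3 : v = w * x := by
    ext
    · exact mul_left_cancel₀ hu0 (by simpa using congrArg QuaternionAlgebra.re h2)
    · exact mul_left_cancel₀ hu0 (by simpa using congrArg QuaternionAlgebra.imI h2)
    · exact mul_left_cancel₀ hu0 (by simpa using congrArg QuaternionAlgebra.imJ h2)
    · exact mul_left_cancel₀ hu0 (by simpa using congrArg QuaternionAlgebra.imK h2)
  have h4 : (!![t, -1; 0, 0] : Matrix (Fin 2) (Fin 2) (ZMod u)) *ᵥ ![1, t'] = 0 := by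
    rw [← hv, h3, quatRep_mul h, ← Matrix.mulVec_mulVec, ht', Matrix.mulVec_zero]
  have h5 := congrFun h4 0
  simp [Matrix.mulVec, dotProduct, Fin.sum_univ_two] at h5
  linear_combination h5

/-- An odd number `u` has at least `u` representations as a sum of four squares. -/
lemma le_card_pts_four (u : ℕ) (hu : Odd u) : u ≤ (pts 4 u).card := by
  obtain ⟨α, β, h⟩ := exists_sq_add_sq_neg_one u hu
  have hu1 : 1 ≤ u := hu.pos
  have : NeZero u := ⟨hu.pos.ne'⟩
  obtain ⟨c, hc⟩ : ∃ c : ZMod u, c * 2 = 1 := by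
    obtain ⟨k, rfl⟩ := hu
    refine ⟨((k + 1 : ℕ) : ZMod (2 * k + 1)), ?_⟩
    have : ((2 * k + 1 : ℕ) : ZMod (2 * k + 1)) = 0 := ZMod.natCast_self _
    push_cast at this ⊢
    linear_combination this
  have key : ∀ t : ZMod u, ∃ x ∈ pts 4 u, quatRep α β (toQuat x) *ᵥ ![1, t] = 0 := by
    intro t
    obtain ⟨x, hx0, hfx, hlt⟩ := exists_short_mem_ker (G := Fin 2 → ZMod u) hu1 (by simp [ZMod.card])
      { toFun := fun x => quatRep α β (toQuat x) *ᵥ ![1, t]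
        map_zero' := by
          have : quatRep α β (toQuat 0) = 0 := by
            ext i j
            fin_cases i <;> fin_cases j <;> simp [quatRep, toQuat]
          rw [this, Matrix.zero_mulVec]
        map_add' := fun x y => by
          rw [show toQuat (x + y) = toQuat x + toQuat y from rfl, quatRep_add, Matrix.add_mulVec] }
    refine ⟨x, ?_, hfx⟩
    replace hfx : quatRep α β (toQuat x) *ᵥ ![1, t] = 0 := hfx
    have hdet := quatRep_det h (toQuat x)
    have h0 := mulVec_quatRep (α := α) (β := β) (toQuat x) t
    rw [hfx] at h0
    have e0 := congrFun h0 0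
    have e1 := congrFun h0 1
    simp only [Matrix.cons_val_zero, Matrix.cons_val_one, Pi.zero_apply] at e0 e1
    have hz : (quatRep α β (toQuat x)).det = 0 := by
      rw [Matrix.det_fin_two]
      linear_combination -quatRep α β (toQuat x) 1 1 * e0 + quatRep α β (toQuat x) 0 1 * e1
    rw [hz, eq_comm, ZMod.intCast_zmod_eq_zero_iff_dvd] at hdet
    have hN : ∑ i, x i ^ 2 = (toQuat x).re ^ 2 + (toQuat x).imI ^ 2 + (toQuat x).imJ ^ 2
        + (toQuat x).imK ^ 2 := by simp [Fin.sum_univ_four, toQuat]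
    rw [← hN] at hdet
    obtain ⟨k, hk⟩ := hdet
    have hpos : 0 < ∑ i, x i ^ 2 := by
      obtain ⟨i, hi⟩ := Function.ne_iff.1 hx0
      exact Finset.sum_pos' (fun i _ => sq_nonneg _) ⟨i, Finset.mem_univ i, by
        have : x i ≠ 0 := hi
        positivity⟩
    have hk1 : k = 1 := by
      have hu' : (0 : ℤ) < u := by exact_mod_cast hu1
      rw [hk] at hpos hlt
      have : 0 < k := pos_of_mul_pos_right hpos hu'.le
      have : k < 2 := by nlinarith
      omega
    rw [mem_pts, hk, hk1, mul_one]
  choose x hx hxt using key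
  have hinj : Function.Injective x := by
    intro t t' htt
    refine quat_line_unique hu h hc (x := toQuat (x t)) ?_ (hxt t) (htt ▸ hxt t')
    have := mem_pts.1 (hx t)
    rw [Fin.sum_univ_four] at this
    rw [← this]
    exact star_mul_self_quat (toQuat (x t))
  calc u = (Finset.univ : Finset (ZMod u)).card := by rw [Finset.card_univ, ZMod.card]
    _ ≤ _ := Finset.card_le_card_of_injOn x (fun t _ => hx t) hinj.injOn

end

/-! ### Lower bound for the number of representations -/

/-- Fibration of the representations in `n + 1` variables over one coordinate. -/
lemma sum_card_pts_le (n m : ℕ) (K : Finset ℕ) (hK : ∀ k ∈ K, k ^ 2 ≤ m) :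
    ∑ k ∈ K, (pts n (m - k ^ 2)).card ≤ (pts (n + 1) m).card := by
  rw [← Finset.card_sigma]
  refine Finset.card_le_card_of_injOn (fun p => (Fin.cons (p.1 : ℤ) p.2 : Fin (n + 1) → ℤ)) ?_ ?_
  · rintro ⟨k, x⟩ h
    simp only [Finset.coe_sigma, Set.mem_sigma_iff, Finset.mem_coe, mem_pts] at h ⊢
    rw [Fin.sum_univ_succ]
    simp only [Fin.cons_zero, Fin.cons_succ]
    rw [h.2, Nat.cast_sub (hK k h.1)]
    push_cast
    ring
  · rintro ⟨k, x⟩ - ⟨k', x'⟩ - h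
    have h' := Fin.cons_inj.1 h
    obtain ⟨h1, h2⟩ := h'
    have : k = k' := by exact_mod_cast h1
    subst this
    subst h2
    rfl

lemma half_le_sub {m k : ℕ} (hk : 2 * k ^ 2 ≤ m) : (m : ℝ) / 2 ≤ ((m - k ^ 2 : ℕ) : ℝ) := by
  rw [Nat.cast_sub (by omega)]
  have : (2 : ℝ) * (k : ℝ) ^ 2 ≤ m := by exact_mod_cast hk
  push_cast
  linarith

lemma sqrt_half_le (m : ℕ) : √((m : ℝ) / 2) ≤ Nat.sqrt (m / 2) + 1 := by
  rw [Real.sqrt_le_left (by positivity)]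
  have h1 := Nat.lt_succ_sqrt (m / 2)
  have h2 : m < 2 * ((Nat.sqrt (m / 2) + 1) * (Nat.sqrt (m / 2) + 1)) := by
    simp only [Nat.succ_eq_add_one] at h1
    omega
  have h3 : (m : ℝ) < 2 * ((Nat.sqrt (m / 2) + 1) * (Nat.sqrt (m / 2) + 1)) := by exact_mod_cast h2
  nlinarith

lemma two_mul_sq_le {m k : ℕ} (hk : k ≤ Nat.sqrt (m / 2)) : 2 * k ^ 2 ≤ m := by
  have := Nat.le_sqrt'.1 hk
  omega

/-- Subtracting one square `k²` of the parity making `m - k²` odd, with `k² ≤ m / 2`, reduces five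
squares to `le_card_pts_four`. -/
lemma card_pts_five (m : ℕ) (hm : 1 ≤ m) :
    √((m : ℝ) / 2) / 4 * (m / 2) ≤ (pts 5 m).card := by
  obtain ⟨δ, hδ1, hδ⟩ : ∃ δ ≤ 1, (m + δ) % 2 = 1 := by
    rcases Nat.even_or_odd' m with ⟨k, hk | hk⟩
    · exact ⟨1, le_rfl, by omega⟩
    · exact ⟨0, by omega, by omega⟩
  set s := Nat.sqrt (m / 2) with hs
  have hδs : δ ≤ s := by
    rcases Nat.eq_zero_or_pos δ with h | h
    · omega
    · have : 1 ≤ s := Nat.le_sqrt'.2 (by omega)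
      omega
  set K := (Finset.range ((s - δ) / 2 + 1)).image (fun j => 2 * j + δ) with hK
  have hKs : ∀ k ∈ K, k ≤ s ∧ k % 2 = δ := by
    intro k hk
    simp only [hK, Finset.mem_image, Finset.mem_range] at hk
    obtain ⟨j, hj, rfl⟩ := hk
    omega
  have hKc : K.card = (s - δ) / 2 + 1 := by
    rw [hK, Finset.card_image_of_injective, Finset.card_range]
    intro a b h
    simp only at h
    omega
  have hm2 : ∀ k ∈ K, 2 * k ^ 2 ≤ m := fun k hk => two_mul_sq_le (hKs k hk).1
  have h1 := sum_card_pts_le 4 m K fun k hk => by have := hm2 k hk; omega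
  have h2 : ∑ k ∈ K, (m : ℝ) / 2 ≤ ∑ k ∈ K, ((pts 4 (m - k ^ 2)).card : ℝ) := by
    refine Finset.sum_le_sum fun k hk => (half_le_sub (hm2 k hk)).trans ?_
    have hodd : Odd (m - k ^ 2) := by
      rw [Nat.odd_sub (by have := hm2 k hk; omega), Nat.odd_iff, Nat.even_pow, Nat.even_iff,
        (hKs k hk).2]
      omega
    exact_mod_cast le_card_pts_four _ hodd
  rw [Finset.sum_const, hKc, nsmul_eq_mul] at h2
  have h3 : ∑ k ∈ K, ((pts 4 (m - k ^ 2)).card : ℝ) ≤ (pts 5 m).card := by exact_mod_cast h1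
  refine le_trans (mul_le_mul_of_nonneg_right ?_ (by positivity)) (h2.trans h3)
  have h4 := sqrt_half_le m
  have h5 : s + 1 ≤ 4 * ((s - δ) / 2 + 1) := by omega
  have h6 : (s : ℝ) + 1 ≤ 4 * (((s - δ) / 2 + 1 : ℕ) : ℝ) := by exact_mod_cast h5
  linarith

/-- `r_n(m) ≫ m^(n/2-1)` for `n ≥ 5`. -/
theorem card_pts_lower {n : ℕ} (hn : 5 ≤ n) : ∃ c : ℝ, 0 < c ∧ ∀ m : ℕ, 1 ≤ m →
    c * (m : ℝ) ^ ((n : ℝ) / 2 - 1) ≤ (pts n m).card := by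
  induction n, hn using Nat.le_induction with
  | base =>
    refine ⟨(1 / 2) ^ ((1 : ℝ) / 2) / 8, by positivity, fun m hm => ?_⟩
    refine le_trans (le_of_eq ?_) (card_pts_five m hm)
    have hm0 : (0 : ℝ) < m := by exact_mod_cast hm
    rw [show ((5 : ℕ) : ℝ) / 2 - 1 = 1 / 2 + 1 by norm_num, Real.rpow_add_one hm0.ne',
      Real.sqrt_eq_rpow, div_eq_mul_one_div (m : ℝ) 2, Real.mul_rpow hm0.le (by norm_num)]
    ring
  | succ n hn ih =>
    obtain ⟨c, hc, h⟩ := ih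
    have hn' : (5 : ℝ) ≤ n := by exact_mod_cast hn
    refine ⟨c * (1 / 2) ^ ((n : ℝ) / 2 - 1 / 2), by positivity, fun m hm => ?_⟩
    have hm0 : (0 : ℝ) < m := by exact_mod_cast hm
    set s := Nat.sqrt (m / 2) with hs
    have hm2 : ∀ k ∈ Finset.range (s + 1), 2 * k ^ 2 ≤ m := fun k hk =>
      two_mul_sq_le (by have := Finset.mem_range.1 hk; omega)
    have h1 := sum_card_pts_le n m (Finset.range (s + 1)) fun k hk => by have := hm2 k hk; omega
    have h2 : ∑ k ∈ Finset.range (s + 1), c * ((m : ℝ) / 2) ^ ((n : ℝ) / 2 - 1) ≤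
        ∑ k ∈ Finset.range (s + 1), ((pts n (m - k ^ 2)).card : ℝ) := by
      refine Finset.sum_le_sum fun k hk => ?_
      have h2k := hm2 k hk
      refine le_trans ?_ (h (m - k ^ 2) (by omega))
      have := half_le_sub h2k
      gcongr
      linarith
    have h3 : ∑ k ∈ Finset.range (s + 1), ((pts n (m - k ^ 2)).card : ℝ) ≤ (pts (n + 1) m).card := by
      exact_mod_cast h1
    refine le_trans ?_ (h2.trans h3)
    rw [Finset.sum_const, Finset.card_range, nsmul_eq_mul]
    have h4 := sqrt_half_le m
    calc _ = √((m : ℝ) / 2) * (c * ((m : ℝ) / 2) ^ ((n : ℝ) / 2 - 1)) := by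
          have hexp : ((n + 1 : ℕ) : ℝ) / 2 - 1 = n / 2 - 1 / 2 := by push_cast; ring
          rw [Real.sqrt_eq_rpow, mul_left_comm, ← Real.rpow_add (by positivity), mul_assoc, hexp,
            ← Real.mul_rpow (by norm_num) hm0.le, one_div_mul_eq_div]
          congr 2
          ring
      _ ≤ _ := by
          push_cast
          gcongr

/-! ### A coupling from a kernel -/

lemma integrable_exp_inner {n : ℕ} (μ : Measure (En n)) [IsProbabilityMeasure μ]
    (hμ : ∀ᵐ x ∂μ, ‖x‖ = 1) (t : ℝ) (y : En n) : Integrable (fun x => Real.exp (t * inner ℝ x y)) μ := by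
  refine Integrable.of_bound (C := Real.exp (|t| * ‖y‖)) (by fun_prop) ?_
  filter_upwards [hμ] with x hx
  rw [Real.norm_eq_abs, abs_of_pos (Real.exp_pos _)]
  refine Real.exp_le_exp.2 ((le_abs_self _).trans ?_)
  rw [abs_mul]
  have := abs_real_inner_le_norm x y
  rw [hx, one_mul] at this
  gcongr

/-- Smoothing by the kernel `exp (t⟪x, y⟫)`: on the sphere, if this kernel has constant mass `I`
with respect to `ν` and mass at most `I * (1 + η)` with respect to `μ`, then normalising it and
adding a product measure of mass at most `η` gives a coupling of `μ` and `ν`, whose cost is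
controlled by the spread `D` of the kernel. -/
theorem coupling_bound {n : ℕ} (μ ν : Measure (En n)) [IsProbabilityMeasure μ]
    [IsProbabilityMeasure ν] (hμ : ∀ᵐ x ∂μ, ‖x‖ = 1) (hν : ∀ᵐ y ∂ν, ‖y‖ = 1) (t I η D : ℝ)
    (hI : 0 < I) (hη : 0 ≤ η) (hD : 0 ≤ D)
    (h1 : ∀ x : En n, ‖x‖ = 1 → ∫ y, Real.exp (t * inner ℝ x y) ∂ν = I)
    (h2 : ∀ y : En n, ‖y‖ = 1 → ∫ x, Real.exp (t * inner ℝ x y) ∂μ ≤ I * (1 + η))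
    (h3 : ∀ x : En n, ‖x‖ = 1 →
      ∫ y, (2 - 2 * inner ℝ x y) * Real.exp (t * inner ℝ x y) ∂ν ≤ D * I) :
    W2sq μ ν ≤ D + 4 * η := by
  have hN : 0 < 1 + η := by linarith
  set N := 1 + η with hNdef
  have hIN : 0 < I * N := mul_pos hI hN
  set K : En n × En n → ℝ := fun p => Real.exp (t * inner ℝ p.1 p.2) with hK
  have hKc : Continuous K := by simp only [hK]; fun_prop
  have hKpos : ∀ p, 0 < K p := fun p => Real.exp_pos _
  set U : En n → ℝ := fun y => ∫ x, K (x, y) ∂μ with hU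
  have hUm : Measurable U := (hKc.stronglyMeasurable.integral_prod_left' (μ := μ)).measurable
  have hU0 : ∀ y, 0 ≤ U y := fun y => integral_nonneg fun x => (hKpos _).le
  have hUle : ∀ y : En n, ‖y‖ = 1 → U y / (I * N) ≤ 1 := fun y hy => by
    rw [div_le_one hIN]; exact h2 y hy
  have hiy : ∀ x : En n, Integrable (fun y => K (x, y)) ν := fun x => by
    simpa only [hK, real_inner_comm] using integrable_exp_inner ν hν t x
  have hix : ∀ y : En n, Integrable (fun x => K (x, y)) μ := fun y =>
    integrable_exp_inner μ hμ t y
  have hae : ∀ᵐ p ∂(μ.prod ν), ‖p.1‖ = 1 ∧ ‖p.2‖ = 1 :=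
    (Measure.quasiMeasurePreserving_fst.ae hμ).and (Measure.quasiMeasurePreserving_snd.ae hν)
  have hKint : Integrable K (μ.prod ν) := by
    refine Integrable.of_bound (C := Real.exp |t|) hKc.aestronglyMeasurable ?_
    filter_upwards [hae] with p hp
    rw [Real.norm_eq_abs, abs_of_pos (hKpos p)]
    refine Real.exp_le_exp.2 ((le_abs_self _).trans ?_)
    rw [abs_mul]
    have := abs_real_inner_le_norm p.1 p.2
    rw [hp.1, hp.2, one_mul] at this
    exact mul_le_of_le_one_right (abs_nonneg _) this
  have hUint : Integrable U ν := hKint.integral_prod_right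
  have hUI : ∫ y, U y ∂ν = I := by
    have : ∫ x, ∫ y, K (x, y) ∂ν ∂μ = ∫ y, U y ∂ν := integral_integral_swap hKint
    rw [← this, integral_congr_ae (g := fun _ => I) (by filter_upwards [hμ] with x hx using h1 x hx)]
    simp
  set G : En n × En n → ENNReal := fun p =>
    ENNReal.ofReal (K p / (I * N)) + ENNReal.ofReal (1 - U p.2 / (I * N)) with hG
  have hGm : Measurable G := by
    have := hKc.measurable
    simp only [hG]
    fun_prop
  have hKl : ∀ x : En n, ‖x‖ = 1 → ∫⁻ y, ENNReal.ofReal (K (x, y) / (I * N)) ∂ν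
      = ENNReal.ofReal (1 / N) := by
    intro x hx
    rw [← ofReal_integral_eq_lintegral_ofReal ((hiy x).div_const _)
      (ae_of_all _ fun y => (div_pos (hKpos _) hIN).le), integral_div, h1 x hx]
    congr 1
    field_simp
  have hUl : ∫⁻ y, ENNReal.ofReal (1 - U y / (I * N)) ∂ν = ENNReal.ofReal (1 - 1 / N) := by
    have hi : Integrable (fun y => 1 - U y / (I * N)) ν :=
      (integrable_const _).sub (hUint.div_const _)
    rw [← ofReal_integral_eq_lintegral_ofReal hi
      (by filter_upwards [hν] with y hy using sub_nonneg.2 (hUle y hy)),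
      integral_sub (integrable_const _) (hUint.div_const _), integral_div, hUI]
    congr 1
    simp
    field_simp
  have hN1 : 1 / N ≤ 1 := by rw [div_le_one hN]; linarith
  have hA : ∀ x : En n, ‖x‖ = 1 → ∫⁻ y, G (x, y) ∂ν = 1 := by
    intro x hx
    simp only [hG]
    rw [lintegral_add_right _ (by fun_prop), hKl x hx, hUl,
      ← ENNReal.ofReal_add (by positivity) (by linarith)]
    simp
  have hB : ∀ y : En n, ‖y‖ = 1 → ∫⁻ x, G (x, y) ∂μ = 1 := by
    intro y hy
    simp only [hG]
    rw [lintegral_add_right _ (by fun_prop), lintegral_const, measure_univ, mul_one,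
      ← ofReal_integral_eq_lintegral_ofReal ((hix y).div_const _)
      (ae_of_all _ fun y => (div_pos (hKpos _) hIN).le), integral_div,
      ← ENNReal.ofReal_add (div_nonneg (hU0 y) hIN.le) (sub_nonneg.2 (hUle y hy))]
    simp [hU]
  set P := (μ.prod ν).withDensity G with hP
  have hfst : P.map Prod.fst = μ := by
    ext A hA'
    rw [Measure.map_apply measurable_fst hA', hP, withDensity_apply _ (measurable_fst hA'),
      ← Set.prod_univ, ← Measure.prod_restrict, Measure.restrict_univ,
      lintegral_prod _ hGm.aemeasurable,
      setLIntegral_congr_fun_ae hA' (g := fun _ => 1) (by filter_upwards [hμ] with x hx _ using hA x hx)]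
    simp
  have hsnd : P.map Prod.snd = ν := by
    ext A hA'
    rw [Measure.map_apply measurable_snd hA', hP, withDensity_apply _ (measurable_snd hA'),
      ← Set.univ_prod, ← Measure.prod_restrict, Measure.restrict_univ,
      lintegral_prod_symm _ hGm.aemeasurable,
      setLIntegral_congr_fun_ae hA' (g := fun _ => 1) (by filter_upwards [hν] with x hx _ using hB x hx)]
    simp
  unfold W2sq
  refine le_trans (csInf_le (a := ∫ p : En n × En n, dist p.1 p.2 ^ 2 ∂P) ⟨0, ?_⟩
    ⟨P, hfst, hsnd, rfl⟩) ?_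
  · rintro c ⟨ρ, -, -, rfl⟩
    exact integral_nonneg fun p => by positivity
  rw [integral_eq_lintegral_of_nonneg_ae (ae_of_all _ fun p => by positivity)
    (by fun_prop : Continuous fun p : En n × En n => dist p.1 p.2 ^ 2).aestronglyMeasurable]
  refine ENNReal.toReal_le_of_le_ofReal (by positivity) ?_
  rw [hP, lintegral_withDensity_eq_lintegral_mul _ hGm (by fun_prop),
    lintegral_prod _ (by fun_prop)]
  have hfin : ∀ x : En n, ‖x‖ = 1 →
      ∫⁻ y, (G * fun p : En n × En n => ENNReal.ofReal (dist p.1 p.2 ^ 2)) (x, y) ∂ν ≤ ENNReal.ofReal (D + 4 * η) := by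
    intro x hx
    have hd : ∀ y : En n, ‖y‖ = 1 → dist x y ^ 2 = 2 - 2 * inner ℝ x y := by
      intro y hy
      rw [dist_eq_norm, norm_sub_sq_real, hx, hy]; ring
    have hd4 : ∀ y : En n, ‖y‖ = 1 → dist x y ^ 2 ≤ 4 := by
      intro y hy
      have : dist x y ≤ 2 := by
        rw [dist_eq_norm]; exact (norm_sub_le _ _).trans (by rw [hx, hy]; norm_num)
      nlinarith [dist_nonneg (x := x) (y := y)]
    calc _ ≤ ∫⁻ y, (ENNReal.ofReal ((2 - 2 * inner ℝ x y) * K (x, y) / (I * N)) +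
          ENNReal.ofReal 4 * ENNReal.ofReal (1 - U y / (I * N))) ∂ν := by
          refine lintegral_mono_ae ?_
          filter_upwards [hν] with y hy
          simp only [Pi.mul_apply, hG, add_mul]
          refine add_le_add (le_of_eq ?_) ?_
          · rw [← ENNReal.ofReal_mul (div_pos (hKpos _) hIN).le, hd y hy]
            congr 1; ring
          · rw [mul_comm]
            gcongr
            exact hd4 y hy
      _ = ∫⁻ y, ENNReal.ofReal ((2 - 2 * inner ℝ x y) * K (x, y) / (I * N)) ∂ν +
          ENNReal.ofReal 4 * ENNReal.ofReal (1 - 1 / N) := by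
          rw [lintegral_add_right _ (by fun_prop), lintegral_const_mul _ (by fun_prop), hUl]
      _ ≤ ENNReal.ofReal D + ENNReal.ofReal (4 * η) := by
          have hint : Integrable (fun y => (2 - 2 * inner ℝ x y) * K (x, y)) ν := by
            refine (hiy x).bdd_mul (c := 4) (by fun_prop) ?_
            filter_upwards [hν] with y hy
            rw [← hd y hy, Real.norm_eq_abs, abs_of_nonneg (by positivity)]
            exact hd4 y hy
          gcongr
          · rw [← ofReal_integral_eq_lintegral_ofReal (hint.div_const _)
              (by
                filter_upwards [hν] with y hy
                rw [← hd y hy]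
                have := hKpos (x, y)
                positivity), integral_div]
            refine ENNReal.ofReal_le_ofReal ?_
            rw [div_le_iff₀ hIN]
            refine (h3 x hx).trans ?_
            have : 0 ≤ D * I := by positivity
            nlinarith
          · rw [← ENNReal.ofReal_mul (by norm_num)]
            refine ENNReal.ofReal_le_ofReal ?_
            have : 1 - η ≤ 1 / N := by rw [le_div_iff₀ hN]; nlinarith
            linarith
      _ = _ := (ENNReal.ofReal_add hD (by positivity)).symm
  calc _ ≤ ∫⁻ _, ENNReal.ofReal (D + 4 * η) ∂μ := lintegral_mono_ae (by
        filter_upwards [hμ] with x hx using hfin x hx)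
    _ = _ := by simp

/-! ### Invariant measures on the sphere -/

section sphere
variable {n : ℕ}

/-- A rotation invariant probability measure on the unit sphere. -/
structure IsUnif (σ : Measure (En n)) : Prop where
  prob : IsProbabilityMeasure σ
  norm_eq : ∀ᵐ x ∂σ, ‖x‖ = 1
  inv : ∀ e : En n ≃ₗᵢ[ℝ] En n, σ.map e = σ

/-- Either the Hausdorff measure of the sphere is `0` or `∞`, and its normalisation is the zero
measure, or `unifSphere` is an invariant probability measure. -/
lemma unifSphere_dichotomy (n : ℕ) : unifSphere n = 0 ∨ IsUnif (unifSphere n) := by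
  set S := Metric.sphere (0 : En n) 1 with hS
  set μ : Measure (En n) := μH[(n : ℝ) - 1] with hμ
  have hSm : MeasurableSet S := Metric.isClosed_sphere.measurableSet
  have hdef : unifSphere n = (μ S)⁻¹ • μ.restrict S := rfl
  rw [hdef]
  by_cases h0 : μ S = 0
  · left
    rw [Measure.restrict_eq_zero.2 h0, smul_zero]
  by_cases htop : μ S = ⊤
  · left
    rw [htop, ENNReal.inv_top, zero_smul]
  right
  refine ⟨⟨?_⟩, ?_, ?_⟩
  · simp [ENNReal.inv_mul_cancel h0 htop]
  · refine Measure.ae_smul_measure ?_ _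
    filter_upwards [ae_restrict_mem hSm] with x hx
    simpa [hS] using hx
  · intro e
    rw [Measure.map_smul]
    congr 1
    have h1 : μ.map e = μ := e.toIsometryEquiv.map_hausdorffMeasure _
    have h2 : e ⁻¹' S = S := by ext x; simp [hS]
    conv_lhs => rw [← h2]
    rw [← Measure.restrict_map e.continuous.measurable hSm, h1]

lemma exists_isometry_apply_eq {x y : En n} (hx : ‖x‖ = 1) (hy : ‖y‖ = 1) :
    ∃ e : En n ≃ₗᵢ[ℝ] En n, e x = y :=
  ⟨_, Submodule.reflection_sub (hx.trans hy.symm)⟩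

/-- Integrals over the sphere of functions of `⟪x, z⟫` do not depend on the unit vector `x`. -/
lemma IsUnif.integral_eq {σ : Measure (En n)} (hσ : IsUnif σ) {x y : En n} (hx : ‖x‖ = 1)
    (hy : ‖y‖ = 1) (f : ℝ → ℝ) :
    ∫ z, f (inner ℝ x z) ∂σ = ∫ z, f (inner ℝ y z) ∂σ := by
  obtain ⟨e, rfl⟩ := exists_isometry_apply_eq hx hy
  conv_rhs => rw [← hσ.inv e]
  have he : MeasurableEmbedding e := e.toHomeomorph.measurableEmbedding
  rw [he.integral_map]
  simp

/-- Some subset of the sphere of diameter `O(1/t)` has measure `≫ t^(-n)`, by the pigeonhole principle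
on the cells of a grid of mesh `1/L` with `L ≍ t`; hence the exponential integral is
`≫ t^(-n) e^t`. -/
lemma IsUnif.exp_lower (n : ℕ) : ∃ c : ℝ, 0 < c ∧ ∀ σ : Measure (En n), IsUnif σ →
    ∀ t : ℝ, 1 ≤ t → ∀ x : En n, ‖x‖ = 1 →
    c * t ^ (-(n : ℝ)) * Real.exp t ≤ ∫ z, Real.exp (t * inner ℝ x z) ∂σ := by
  refine ⟨Real.exp (-1) * ((4 * n + 5 : ℝ) ^ n)⁻¹, by positivity, ?_⟩
  intro σ hσ t ht x hx
  have := hσ.prob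
  set L : ℕ := ⌈t⌉₊ * (n + 1) with hL
  have ht0 : 0 < t := by linarith
  have hLt : t * (n + 1) ≤ L := by
    rw [hL]; push_cast
    gcongr
    exact Nat.le_ceil t
  have hLt2 : (L : ℝ) ≤ 2 * t * (n + 1) := by
    rw [hL]; push_cast
    have := (Nat.ceil_lt_add_one ht0.le).le
    gcongr
    linarith
  set q : En n → Fin n → ℤ := fun z i => ⌊(L : ℝ) * z i⌋ with hq
  have hqm : ∀ i, Measurable fun z : En n => q z i := fun i =>
    Int.measurable_floor.comp (by fun_prop)
  set B : Finset (Fin n → ℤ) := Fintype.piFinset fun _ => Finset.Icc (-(L : ℤ)) L with hB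
  have hBc : B.card = (2 * L + 1) ^ n := by
    simp only [hB, Fintype.card_piFinset, Int.card_Icc, Finset.prod_const, Finset.card_univ,
      Fintype.card_fin]
    congr 1
    omega
  have hcoord : ∀ z : En n, ‖z‖ = 1 → ∀ i, |z i| ≤ 1 := fun z hz i => by
    have := PiLp.norm_apply_le z i
    rwa [hz] at this
  have hqB : ∀ z : En n, ‖z‖ = 1 → q z ∈ B := by
    intro z hz
    simp only [hB, Fintype.mem_piFinset, Finset.mem_Icc, hq]
    intro i
    have := abs_le.1 (hcoord z hz i)
    have hL0 : (0 : ℝ) ≤ L := by positivity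
    constructor
    · rw [Int.le_floor]; push_cast; nlinarith
    · rw [← Int.cast_le (R := ℝ)]
      refine (Int.floor_le _).trans ?_
      push_cast; nlinarith
  set S := Metric.sphere (0 : En n) 1 with hS
  have hSm : MeasurableSet S := Metric.isClosed_sphere.measurableSet
  set cell : (Fin n → ℤ) → Set (En n) := fun b => S ∩ {z | q z = b} with hcell
  have hcm : ∀ b, MeasurableSet (cell b) := fun b => by
    refine hSm.inter ?_
    have : {z | q z = b} = ⋂ i, {z | q z i = b i} := by
      ext z; simp [funext_iff]
    rw [this]
    exact MeasurableSet.iInter fun i => hqm i (measurableSet_singleton (b i))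
  have hSfull : σ.real S = 1 := by
    have : σ S = 1 := prob_compl_eq_zero_iff hSm |>.1 (by
      have := hσ.norm_eq
      rw [ae_iff] at this
      convert this using 2
      ext z; simp [hS])
    simp [Measure.real, this]
  have hex : ∃ b ∈ B, (((2 * L + 1) ^ n : ℕ) : ℝ)⁻¹ ≤ σ.real (cell b) := by
    by_contra! hlt
    have hcov : S ⊆ ⋃ b ∈ B, cell b := fun z hz => by
      simp only [Set.mem_iUnion]
      exact ⟨q z, hqB z (by simpa [hS] using hz), hz, rfl⟩
    have h1 : σ.real S ≤ ∑ b ∈ B, σ.real (cell b) :=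
      (measureReal_mono hcov (measure_ne_top _ _)).trans (measureReal_biUnion_finset_le B cell)
    have hBne : B.Nonempty := ⟨q x, hqB x hx⟩
    have h2 := Finset.sum_lt_sum_of_nonempty hBne hlt
    rw [Finset.sum_const, hBc, nsmul_eq_mul, mul_inv_cancel₀ (by positivity)] at h2
    linarith
  obtain ⟨b, -, hb⟩ := hex
  have hne : (cell b).Nonempty := by
    by_contra hemp
    rw [Set.not_nonempty_iff_eq_empty] at hemp
    rw [hemp, measureReal_empty] at hb
    have : (0 : ℝ) < (((2 * L + 1) ^ n : ℕ) : ℝ)⁻¹ := by positivity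
    linarith
  obtain ⟨w, hw⟩ := hne
  have hw1 : ‖w‖ = 1 := by simpa [hS] using hw.1
  rw [hσ.integral_eq hx hw1 fun s => Real.exp (t * s)]
  have hclose : ∀ z ∈ cell b, t - 1 ≤ t * inner ℝ w z := by
    intro z hz
    have hz1 : ‖z‖ = 1 := by simpa [hS] using hz.1
    have hL0 : (0 : ℝ) < L := by nlinarith
    have hi : ∀ i, ((w - z) i) ^ 2 ≤ (1 / (L : ℝ)) ^ 2 := by
      intro i
      have e1 : ⌊(L : ℝ) * w i⌋ = ⌊(L : ℝ) * z i⌋ :=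
        (congrFun hw.2 i).trans (congrFun hz.2 i).symm
      have e2 := Int.abs_sub_lt_one_of_floor_eq_floor e1
      rw [← mul_sub, abs_mul, abs_of_pos hL0] at e2
      rw [sq_le_sq, abs_of_pos (by positivity : 0 < 1 / (L : ℝ)), le_div_iff₀ hL0]
      simp only [PiLp.sub_apply]
      linarith
    have hn1 : ‖w - z‖ ^ 2 ≤ n * (1 / (L : ℝ)) ^ 2 := by
      rw [EuclideanSpace.real_norm_sq_eq]
      refine (Finset.sum_le_sum fun i _ => hi i).trans ?_
      simp
    rw [norm_sub_sq_real, hw1, hz1] at hn1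
    have h5 : t * (n * (1 / (L : ℝ)) ^ 2) ≤ 1 := by
      rw [one_div, inv_pow, ← mul_assoc, mul_inv_le_iff₀ (by positivity)]
      have : (n : ℝ) + 1 ≤ L := by nlinarith [show (0 : ℝ) ≤ n by positivity]
      nlinarith [show (0 : ℝ) ≤ n by positivity]
    nlinarith
  have hint : Integrable (fun z => Real.exp (t * inner ℝ w z)) σ := by
    simpa only [real_inner_comm] using integrable_exp_inner σ hσ.norm_eq t w
  calc _ ≤ Real.exp (t - 1) * (((2 * L + 1) ^ n : ℕ) : ℝ)⁻¹ := by
        rw [sub_eq_neg_add, Real.exp_add, Real.rpow_neg ht0.le, Real.rpow_natCast]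
        have : (((2 * L + 1) ^ n : ℕ) : ℝ) ≤ (4 * n + 5 : ℝ) ^ n * t ^ n := by
          rw [← mul_pow]
          push_cast
          gcongr
          nlinarith
        have h6 : ((4 * n + 5 : ℝ) ^ n * t ^ n)⁻¹ ≤ (((2 * L + 1) ^ n : ℕ) : ℝ)⁻¹ :=
          inv_anti₀ (by positivity) this
        rw [mul_inv] at h6
        calc _ = Real.exp (-1) * Real.exp t * (((4 * n + 5 : ℝ) ^ n)⁻¹ * (t ^ n)⁻¹) := by ring
          _ ≤ _ := by gcongr
    _ ≤ Real.exp (t - 1) * σ.real (cell b) := by gcongr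
    _ = ∫ z in cell b, Real.exp (t - 1) ∂σ := by
        rw [setIntegral_const, smul_eq_mul, mul_comm]
    _ ≤ ∫ z in cell b, Real.exp (t * inner ℝ w z) ∂σ := by
        refine setIntegral_mono_on (integrable_const _).integrableOn hint.integrableOn (hcm b) ?_
        intro z hz
        exact Real.exp_le_exp.2 (hclose z hz)
    _ ≤ _ := setIntegral_le_integral hint (ae_of_all _ fun z => (Real.exp_pos _).le)

/-- The kernel `exp (t⟪x, ·⟫)` is concentrated near `x`: the part with `⟪x, y⟫ ≤ 1 - δ`, where
`δ = t^(-1/2)`, is negligible in view of `IsUnif.exp_lower`. -/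
lemma IsUnif.spread_le (n : ℕ) : ∃ C : ℝ, 0 ≤ C ∧ ∀ σ : Measure (En n), IsUnif σ →
    ∀ t : ℝ, 1 ≤ t → ∀ x : En n, ‖x‖ = 1 →
    ∫ y, (2 - 2 * inner ℝ x y) * Real.exp (t * inner ℝ x y) ∂σ ≤
      C * t ^ (-(1 / 2 : ℝ)) * ∫ y, Real.exp (t * inner ℝ x y) ∂σ := by
  obtain ⟨c, hc, h⟩ := IsUnif.exp_lower n
  refine ⟨2 + 4 * (2 * n + 1).factorial / c, by positivity, ?_⟩
  intro σ hσ t ht x hx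
  have := hσ.prob
  have ht0 : 0 < t := by linarith
  have hI := h σ hσ t ht x hx
  set I := ∫ y, Real.exp (t * inner ℝ x y) ∂σ with hIdef
  set δ := t ^ (-(1 / 2 : ℝ)) with hδ
  have hδ0 : 0 < δ := by positivity
  have hint : Integrable (fun z => Real.exp (t * inner ℝ x z)) σ := by
    simpa only [real_inner_comm] using integrable_exp_inner σ hσ.norm_eq t x
  have hpt : ∀ᵐ y ∂σ, (2 - 2 * inner ℝ x y) * Real.exp (t * inner ℝ x y) ≤
      2 * δ * Real.exp (t * inner ℝ x y) + 4 * Real.exp (t * (1 - δ)) := by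
    filter_upwards [hσ.norm_eq] with y hy
    have hs := abs_le.1 ((abs_real_inner_le_norm x y).trans (by rw [hx, hy, one_mul]))
    have hE := Real.exp_pos (t * inner ℝ x y)
    have hE' := Real.exp_pos (t * (1 - δ))
    rcases le_total (1 - δ) (inner ℝ x y) with h1 | h1
    · have : (2 - 2 * inner ℝ x y) * Real.exp (t * inner ℝ x y) ≤
          2 * δ * Real.exp (t * inner ℝ x y) := by
        gcongr; linarith
      linarith
    · have h2 : Real.exp (t * inner ℝ x y) ≤ Real.exp (t * (1 - δ)) :=
        Real.exp_le_exp.2 (by gcongr)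
      have : (2 - 2 * inner ℝ x y) * Real.exp (t * inner ℝ x y) ≤ 4 * Real.exp (t * (1 - δ)) := by
        have : (2 - 2 * inner ℝ x y) ≤ 4 := by linarith
        nlinarith
      have : 0 ≤ 2 * δ * Real.exp (t * inner ℝ x y) := by positivity
      linarith
  have h1 : ∫ y, (2 - 2 * inner ℝ x y) * Real.exp (t * inner ℝ x y) ∂σ ≤
      2 * δ * I + 4 * Real.exp (t * (1 - δ)) := by
    have hsum : Integrable
        (fun y => 2 * δ * Real.exp (t * inner ℝ x y) + 4 * Real.exp (t * (1 - δ))) σ :=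
      (hint.const_mul (2 * δ)).add (integrable_const _)
    refine (integral_mono_ae ?_ hsum hpt).trans ?_
    · refine hint.bdd_mul (c := 4) (by fun_prop) ?_
      filter_upwards [hσ.norm_eq] with y hy
      have hs := abs_le.1 ((abs_real_inner_le_norm x y).trans (by rw [hx, hy, one_mul]))
      rw [Real.norm_eq_abs, abs_le]
      constructor <;> linarith
    · rw [integral_add (hint.const_mul _) (integrable_const _), integral_const_mul]
      simp [hIdef]
  refine h1.trans ?_
  -- `e^{-√t}` beats every power of `t`
  have htδ : t * δ = √t := by
    rw [hδ, Real.sqrt_eq_rpow]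
    nth_rewrite 1 [← Real.rpow_one t]
    rw [← Real.rpow_add ht0]; norm_num
  have hs0 : 0 < √t := Real.sqrt_pos.2 ht0
  have h2 : Real.exp (t * (1 - δ)) ≤ (2 * n + 1).factorial * δ * (t ^ (-(n : ℝ)) * Real.exp t) := by
    have h3 := Real.pow_div_factorial_le_exp √t hs0.le (2 * n + 1)
    have h4 : √t ^ (2 * n + 1) = t ^ n * √t := by
      rw [pow_succ, pow_mul, Real.sq_sqrt ht0.le]
    have h5 : δ * √t = 1 := by
      have : √t * √t = t := Real.mul_self_sqrt ht0.le
      have h6 : t * (δ * √t) = t * 1 := by rw [← mul_assoc, htδ, this, mul_one]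
      exact mul_left_cancel₀ ht0.ne' h6
    rw [mul_sub, mul_one, htδ, sub_eq_add_neg, Real.exp_add, Real.rpow_neg ht0.le,
      Real.rpow_natCast, Real.exp_neg]
    rw [div_le_iff₀ (by positivity), h4] at h3
    have h7 : (Real.exp √t)⁻¹ ≤ (2 * n + 1).factorial * δ * (t ^ n)⁻¹ := by
      rw [inv_le_iff_one_le_mul₀ (Real.exp_pos _), ← div_eq_mul_inv, div_mul_eq_mul_div,
        le_div_iff₀ (by positivity), one_mul]
      calc t ^ n = δ * (t ^ n * √t) := by linear_combination -t ^ n * h5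
        _ ≤ δ * (Real.exp √t * (2 * n + 1).factorial) := by gcongr
        _ = _ := by ring
    calc _ ≤ Real.exp t * ((2 * n + 1).factorial * δ * (t ^ n)⁻¹) := by gcongr
      _ = _ := by ring
  have h8 : t ^ (-(n : ℝ)) * Real.exp t ≤ I / c := by
    rw [le_div_iff₀ hc]; linarith
  calc _ ≤ 2 * δ * I + 4 * ((2 * n + 1).factorial * δ * (I / c)) := by
        have := mul_le_mul_of_nonneg_left h8
          (by positivity : 0 ≤ ((2 * n + 1).factorial : ℝ) * δ)
        linarith
    _ = _ := by ring

end sphere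

/-! ### Transport from `ρ_m` to `σ` -/

section assembly

/-- The point of the unit sphere given by an integer point of norm `√m`. -/
def spherePt (n m : ℕ) (x : Fin n → ℤ) : En n := WithLp.toLp 2 fun i => (x i : ℝ) / √m

lemma spherePt_injective {n m : ℕ} (hm : 1 ≤ m) : Function.Injective (spherePt n m) := by
  intro x y h
  have hm' : (0 : ℝ) < √m := Real.sqrt_pos.2 (by exact_mod_cast hm)
  funext i
  have := congrArg (fun v : En n => v i) h
  simp only [spherePt] at this
  rw [div_left_inj' hm'.ne'] at this
  exact_mod_cast this

lemma norm_spherePt_eq_one_iff {n m : ℕ} (hm : 1 ≤ m) (x : Fin n → ℤ) :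
    ‖spherePt n m x‖ = 1 ↔ x ∈ pts n m := by
  have hm' : (0 : ℝ) < m := by exact_mod_cast hm
  rw [mem_pts, ← sq_eq_sq₀ (norm_nonneg _) zero_le_one, EuclideanSpace.real_norm_sq_eq]
  simp only [spherePt, div_pow, Real.sq_sqrt hm'.le, one_pow]
  rw [← Finset.sum_div, div_eq_one_iff_eq hm'.ne']
  exact_mod_cast Iff.rfl

open scoped Classical in
lemma Lam_eq {n m : ℕ} (hm : 1 ≤ m) :
    Lam n m = ((pts n m).image (spherePt n m) : Finset (En n)) := by
  ext v
  simp only [Lam, Set.mem_ofPred_eq, Finset.coe_image, Set.mem_image, Finset.mem_coe]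
  constructor
  · rintro ⟨hv, h⟩
    choose z hz using h
    have : spherePt n m z = v := by
      ext i; simp [spherePt, hz]
    refine ⟨z, ?_, this⟩
    rw [← norm_spherePt_eq_one_iff hm, this, hv]
  · rintro ⟨x, hx, rfl⟩
    exact ⟨(norm_spherePt_eq_one_iff hm x).2 hx, fun i => ⟨x i, rfl⟩⟩

lemma rcnt_eq {n m : ℕ} (hm : 1 ≤ m) : rcnt n m = (pts n m).card := by
  classical
  rw [rcnt, Lam_eq hm, Nat.card_coe_set_eq, Set.ncard_coe_finset,
    Finset.card_image_of_injective _ (spherePt_injective hm)]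

lemma isProbabilityMeasure_rhoM {n m : ℕ} (hm : 1 ≤ m) (h : 0 < (pts n m).card) :
    IsProbabilityMeasure (rhoM n m) := by
  classical
  constructor
  rw [rhoM, rcnt_eq hm, Lam_eq hm, Measure.smul_apply, Measure.restrict_apply_univ,
    Measure.count_apply_finset, Finset.card_image_of_injective _ (spherePt_injective hm),
    smul_eq_mul]
  exact ENNReal.inv_mul_cancel (by exact_mod_cast h.ne') (ENNReal.natCast_ne_top _)

lemma ae_norm_rhoM {n m : ℕ} (hm : 1 ≤ m) : ∀ᵐ x ∂(rhoM n m), ‖x‖ = 1 := by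
  classical
  refine Measure.ae_smul_measure ?_ _
  have : MeasurableSet (Lam n m) := by rw [Lam_eq hm]; exact Finset.measurableSet _
  filter_upwards [ae_restrict_mem this] with x hx using hx.1

lemma integral_rhoM {n m : ℕ} (hm : 1 ≤ m) (f : En n → ℝ) :
    ∫ x, f x ∂(rhoM n m) = ((pts n m).card : ℝ)⁻¹ * ∑ x ∈ pts n m, f (spherePt n m x) := by
  classical
  rw [rhoM, rcnt_eq hm, integral_smul_measure, Lam_eq hm, setIntegral_finset,
    Finset.sum_image (spherePt_injective hm).injOn]
  · simp [Measure.real]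
  · set s := (pts n m).image (spherePt n m)
    have : (s : Set (En n)) = ⋃ i ∈ s, {i} := (Set.biUnion_of_singleton (s : Set (En n))).symm
    rw [this, integrableOn_finset_iUnion]
    exact fun i _ => integrableOn_singleton (hx := by simp)

lemma inner_spherePt {n m : ℕ} (t : ℝ) (x : Fin n → ℤ) (y : En n) :
    t * inner ℝ (spherePt n m x) y = t / √m * ∑ j, (x j : ℝ) * y j := by
  simp only [spherePt, PiLp.inner_apply, Finset.mul_sum]
  refine Finset.sum_congr rfl fun i _ => ?_
  simp only [RCLike.inner_apply, conj_trivial]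
  ring

/-- If the second measure is zero there is no coupling and the infimum has the value `0`. -/
lemma W2sq_zero {n : ℕ} (μ : Measure (En n)) [IsProbabilityMeasure μ] : W2sq μ 0 = 0 := by
  rw [W2sq]
  convert Real.sInf_empty
  rw [Set.eq_empty_iff_forall_notMem]
  rintro c ⟨ρ, h1, h2, -⟩
  have h3 : ρ Set.univ = 1 := by
    rw [← Set.preimage_univ (f := Prod.fst (α := En n) (β := En n)),
      ← Measure.map_apply measurable_fst MeasurableSet.univ, h1, measure_univ]
  have h4 : ρ Set.univ = 0 := by
    rw [← Set.preimage_univ (f := Prod.snd (α := En n) (β := En n)),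
      ← Measure.map_apply measurable_snd MeasurableSet.univ, h2]
    simp
  simp [h3] at h4

/-- Averaging the comparison of two exponential sums over the sphere. -/
lemma exp_moment_rhoM {n m : ℕ} (hm : 1 ≤ m) (hr : 0 < (pts n m).card) {σ : Measure (En n)}
    (hσ : IsUnif σ) {t E I : ℝ} (hI : ∀ x : En n, ‖x‖ = 1 → ∫ y, Real.exp (t * inner ℝ x y) ∂σ = I)
    (hw : ∀ y w : En n, ‖y‖ = 1 → ‖w‖ = 1 →
      ∑ x ∈ pts n m, Real.exp (t / √m * ∑ j, (x j : ℝ) * y j) ≤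
        ∑ x ∈ pts n m, Real.exp (t / √m * ∑ j, (x j : ℝ) * w j) + E)
    {y : En n} (hy : ‖y‖ = 1) :
    ∫ x, Real.exp (t * inner ℝ x y) ∂(rhoM n m) ≤ I + E / (pts n m).card := by
  have := hσ.prob
  have hr' : (0 : ℝ) < (pts n m).card := by exact_mod_cast hr
  rw [integral_rhoM hm]
  simp only [inner_spherePt]
  set A := ∑ x ∈ pts n m, Real.exp (t / √m * ∑ j, (x j : ℝ) * y j) with hA
  have hint : ∀ x ∈ pts n m, Integrable
      (fun w : En n => Real.exp (t / √m * ∑ j, (x j : ℝ) * w j)) σ := fun x _ => by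
    have := integrable_exp_inner σ hσ.norm_eq t (spherePt n m x)
    simp only [real_inner_comm (spherePt n m x)] at this
    simpa only [inner_spherePt] using this
  have hints := integrable_finsetSum _ hint
  have h1 : A ≤ (pts n m).card * I + E := by
    calc A = ∫ _, A ∂σ := by simp
      _ ≤ ∫ w, (∑ x ∈ pts n m, Real.exp (t / √m * ∑ j, (x j : ℝ) * w j) + E) ∂σ := by
        refine integral_mono_ae (integrable_const _) (hints.add (integrable_const _)) ?_
        filter_upwards [hσ.norm_eq] with w hw1 using hw y w hy hw1
      _ = _ := by
        rw [integral_add hints (integrable_const _), integral_finsetSum _ hint]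
        congr 1
        · rw [← nsmul_eq_mul, ← Finset.sum_const]
          refine Finset.sum_congr rfl fun x hx => ?_
          rw [← hI _ ((norm_spherePt_eq_one_iff hm x).2 hx)]
          simp only [inner_spherePt]
        · simp
  rw [inv_mul_le_iff₀ hr', mul_add, mul_div_cancel₀ _ hr'.ne']
  exact h1

end assembly

theorem stmt12 (n : ℕ) (hn : 5 ≤ n) (ε : ℝ) (hε : 0 < ε) :
    ∃ C : ℝ, ∀ m : ℕ, 1 ≤ m →
      W2sq (rhoM n m) (unifSphere n) ≤
        C * (m : ℝ) ^
          (-((n : ℝ) - 3) / (2 * (3 * (n : ℝ) - 2) * ((n : ℝ) + 1)) + ε) := by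
  obtain ⟨Cw, hCw, hweyl⟩ := weyl_bound (n := n) (by omega)
  obtain ⟨c₁, hc₁, hcard⟩ := card_pts_lower hn
  obtain ⟨c₂, hc₂, hlow⟩ := IsUnif.exp_lower n
  obtain ⟨Cs, hCs, hspread⟩ := IsUnif.spread_le n
  have hn' : (5 : ℝ) ≤ n := by exact_mod_cast hn
  set e : ℝ := ((n : ℝ) - 3) / (2 * (3 * (n : ℝ) - 2) * ((n : ℝ) + 1)) with he
  have hden : 0 < 2 * (3 * (n : ℝ) - 2) * ((n : ℝ) + 1) := by
    have : 0 < 3 * (n : ℝ) - 2 := by linarith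
    positivity
  have he0 : 0 ≤ e := div_nonneg (by linarith) hden.le
  have he1 : e * (2 * n + 1) ≤ n / 4 - 1 := by
    rw [he, div_mul_eq_mul_div, div_le_iff₀ hden]
    nlinarith [mul_nonneg (sub_nonneg.2 hn') (sub_nonneg.2 hn'),
      mul_nonneg (mul_nonneg (sub_nonneg.2 hn') (sub_nonneg.2 hn')) (sub_nonneg.2 hn')]
  refine ⟨Cs + 4 * (Cw / (c₁ * c₂)), fun m hm => ?_⟩
  have hm1 : (1 : ℝ) ≤ m := by exact_mod_cast hm
  have hm0 : (0 : ℝ) < m := by linarith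
  have hr' : (0 : ℝ) < (pts n m).card := lt_of_lt_of_le (by positivity) (hcard m hm)
  have hr : 0 < (pts n m).card := by exact_mod_cast hr'
  have := isProbabilityMeasure_rhoM hm hr
  rcases unifSphere_dichotomy n with h0 | hσ
  · rw [h0, W2sq_zero]
    positivity
  have := hσ.prob
  set σ := unifSphere n with hσdef
  -- the concentration parameter of the exponential kernel
  set t : ℝ := (m : ℝ) ^ (2 * e) with ht
  have ht1 : 1 ≤ t := Real.one_le_rpow hm1 (by positivity)
  have ht0 : 0 < t := by linarith
  obtain ⟨x₀, hx₀⟩ : ∃ x₀ : En n, ‖x₀‖ = 1 :=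
    ⟨EuclideanSpace.single ⟨0, by omega⟩ 1, by simp⟩
  set I := ∫ y, Real.exp (t * inner ℝ x₀ y) ∂σ with hIdef
  have hI : ∀ x : En n, ‖x‖ = 1 → ∫ y, Real.exp (t * inner ℝ x y) ∂σ = I := fun x hx =>
    hσ.integral_eq hx hx₀ fun s => Real.exp (t * s)
  have hIlow := hlow σ hσ t ht1 x₀ hx₀
  have hI0 : 0 < I := lt_of_lt_of_le (by positivity) hIlow
  have hE : Cw * (m : ℝ) ^ ((n : ℝ) / 4) * Real.exp t / (pts n m).card ≤
      I * (Cw / (c₁ * c₂) * (m : ℝ) ^ (-e)) := by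
    rw [div_le_iff₀ hr']
    have hexp : (m : ℝ) ^ ((n : ℝ) / 4) ≤ t ^ (-(n : ℝ)) * (m : ℝ) ^ (-e) * m ^ ((n : ℝ) / 2 - 1) := by
      rw [ht, ← Real.rpow_mul hm0.le, ← Real.rpow_add hm0, ← Real.rpow_add hm0]
      refine Real.rpow_le_rpow_of_exponent_le hm1 ?_
      nlinarith
    calc Cw * (m : ℝ) ^ ((n : ℝ) / 4) * Real.exp t
        ≤ Cw * (t ^ (-(n : ℝ)) * (m : ℝ) ^ (-e) * m ^ ((n : ℝ) / 2 - 1)) * Real.exp t := by gcongr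
      _ = (c₂ * t ^ (-(n : ℝ)) * Real.exp t) * (Cw / (c₁ * c₂) * (m : ℝ) ^ (-e)) *
          (c₁ * m ^ ((n : ℝ) / 2 - 1)) := by field_simp
      _ ≤ _ := by
        gcongr
        exact hcard m hm
  have key := coupling_bound (rhoM n m) σ (ae_norm_rhoM hm) hσ.norm_eq t I
    (Cw / (c₁ * c₂) * (m : ℝ) ^ (-e)) (Cs * t ^ (-(1 / 2 : ℝ))) hI0 (by positivity) (by positivity)
    hI
    (fun y hy => by
      rw [mul_add, mul_one]
      exact (exp_moment_rhoM hm hr hσ hI (hweyl m hm t ht1) hy).trans (by gcongr))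
    (fun x hx => by
      have := hspread σ hσ t ht1 x hx
      rwa [hI x hx] at this)
  have hte : t ^ (-(1 / 2 : ℝ)) = (m : ℝ) ^ (-e) := by
    rw [ht, ← Real.rpow_mul hm0.le]; congr 1; ring
  have hmono : (m : ℝ) ^ (-e) ≤ (m : ℝ) ^
      (-((n : ℝ) - 3) / (2 * (3 * (n : ℝ) - 2) * ((n : ℝ) + 1)) + ε) := by
    refine Real.rpow_le_rpow_of_exponent_le hm1 ?_
    rw [neg_div, ← he]
    linarith
  calc _ ≤ _ := key
    _ = (Cs + 4 * (Cw / (c₁ * c₂))) * (m : ℝ) ^ (-e) := by rw [hte]; ring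
    _ ≤ _ := by gcongr

end
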